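/- arXiv:2212.08721 — 9 statements merged into one kernel-verified Lean document; each statement's English description precedes it below -/
import Mathlib

section
/- Let R be a monotone transit function on a finite nonempty set V. Then R satisfies axiom (uc) if and only if R satisfies both axiom (u) and axiom (w). -/
/-!
If (uc) holds and `z ∈ R u v`, the union `R u z ∪ R z v` is a transit set containing `u` and `v`, so
it contains `R u v` by monotonicity, which gives (u). For (w), if `x, y, z` violated it, monotonicity
would place each of the transit sets `R x y`, `R y z`, `R x z` inside the union of the other two, so
all pairwise unions agree; the endpoints `p, q` of that common union `R p q` must then both lie in
one of the three sets, which would contain the vertex it omits.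

Conversely, assume (u) and (w). If `z ∈ R x y ∩ R u v`, then (u) writes `R x y ∪ R u v` as a union of
four transit sets with endpoint `z`. Among any three transit sets `R z a`, `R z b`, `R z c`, one is
contained in the union of the other two (`union_three`), so two of the four suffice, and a union
of two transit sets with a common endpoint is a transit set (`union_two`).
-/

namespace TransitPaper

variable {V : Type*}

/-- Transit function axioms (t1), (t2), (t3). -/
def IsTransit (R : V → V → Set V) : Prop :=
  (∀ u v, u ∈ R u v) ∧ (∀ u v, R u v = R v u) ∧ (∀ u : V, R u u = {u})

/-- Monotonicity axiom (m). -/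
def IsMonotone (R : V → V → Set V) : Prop :=
  ∀ u v p q, p ∈ R u v → q ∈ R u v → R p q ⊆ R u v

/-- Two sets overlap: A ∩ B, A \ B, B \ A all nonempty. -/
def Ovl (A B : Set V) : Prop :=
  (A ∩ B).Nonempty ∧ (A \ B).Nonempty ∧ (B \ A).Nonempty

/-- The system of transit sets 𝒞_R. -/
def transitSets (R : V → V → Set V) : Set (Set V) :=
  {S | ∃ x y, S = R x y}

/-- S is an interval with respect to the order `lt`. -/
def IsIntervalWrt (lt : V → V → Prop) (S : Set V) : Prop :=
  ∀ x ∈ S, ∀ y ∈ S, ∀ w, lt x w → lt w y → w ∈ S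

/-- R is pyramidal: monotone and there is a total order making all transit sets intervals. -/
def IsPyramidal (R : V → V → Set V) : Prop :=
  IsMonotone R ∧ ∃ lt : V → V → Prop, IsStrictTotalOrder V lt ∧
    ∀ u v, IsIntervalWrt lt (R u v)

def AxUC (R : V → V → Set V) : Prop :=
  ∀ x y u v : V, (R x y ∩ R u v).Nonempty →
    ∃ p ∈ R x y ∪ R u v, ∃ q ∈ R x y ∪ R u v, R x y ∪ R u v = R p q

def AxU (R : V → V → Set V) : Prop :=
  ∀ u v z : V, z ∈ R u v → R u v = R u z ∪ R z v

def AxW (R : V → V → Set V) : Prop :=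
  ∀ x y z : V, z ∈ R x y ∨ y ∈ R x z ∨ x ∈ R y z

def AxWP (R : V → V → Set V) : Prop :=
  ∀ u v x y p q : V, (R u v ∩ R x y).Nonempty → (R u v ∩ R p q).Nonempty →
    (R x y ∩ R p q).Nonempty →
    R p q ⊆ R u v ∪ R x y ∨ R u v ⊆ R p q ∪ R x y ∨ R x y ⊆ R p q ∪ R u v

def AxI (R : V → V → Set V) : Prop :=
  ∀ x y u v p q : V, (R x y ∩ R u v).Nonempty → R x y ∩ R u v ⊆ R p q →
    (R p q \ (R x y ∪ R u v)).Nonempty → R x y ⊆ R p q ∨ R u v ⊆ R p q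

def AxO' (R : V → V → Set V) : Prop :=
  ∀ u v : V, ∀ z ∈ R u v, ∃ p ∈ R u v, ∃ q ∈ R u v, R p z ∪ R z q = R u v

def AxL1 (R : V → V → Set V) : Prop :=
  ∀ x y p q u v : V, Ovl (R x y) (R p q) → Ovl (R p q) (R u v) →
    R x y ⊆ R u v ∨ R u v ⊆ R x y ∨
      (R x y ∩ R u v ⊆ R p q ∧ R p q ⊆ R x y ∪ R u v)

def AxL2 (R : V → V → Set V) : Prop :=
  ∀ x y p q u v : V, Ovl (R x y) (R p q) → Ovl (R p q) (R u v) →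
    R x y ∩ R u v = ∅ →
    ∃ s ∈ R x y \ R p q, ∃ t ∈ R u v \ R p q,
      R x y ∪ R p q ∪ R u v = R s t

def AxN3O (R : V → V → Set V) : Prop :=
  ∀ x y p q u v : V, Ovl (R x y) (R p q) → Ovl (R p q) (R u v) →
    R x y ⊆ R u v ∨ R u v ⊆ R x y ∨ R x y ∩ R u v = ∅

def AxU3 (R : V → V → Set V) : Prop :=
  ∀ x y : V, ¬ R x y ⊆ {x, y} →
    ∃ z ∈ R x y, z ≠ x ∧ z ≠ y ∧ R x z ∪ R z y = R x y

def AxB3 (R : V → V → Set V) : Prop :=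
  ∀ u v x y : V, x ∈ R u v → y ∈ R u x → x ∈ R y v

def AxB4 (R : V → V → Set V) : Prop :=
  ∀ u v x : V, x ∈ R u v → R u x ∩ R x v = {x}

def AxTB (R : V → V → Set V) : Prop :=
  ∀ W : Finset V, 3 ≤ W.card →
    ∃ x ∈ W, ∀ u ∈ W, ∀ v ∈ W, R x u ⊆ R x v ∨ R x v ⊆ R x u

def AxHC (R : V → V → Set V) : Prop :=
  ∀ W : Finset V, 3 ≤ W.card →
    ∃ x ∈ W, ∃ y ∈ W, x ≠ y ∧
      ∀ u ∈ W, ∀ v ∈ W,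
        (R x u ⊆ R x v ∨ R x v ⊆ R x u) ∧ (R y u ⊆ R y v ∨ R y v ⊆ R y u)

def AxTB' (R : V → V → Set V) : Prop :=
  ∀ n : ℕ, 3 ≤ n → ∀ v : ZMod n → V,
    (∀ k : ZMod n, v (k - 1) ∉ R (v k) (v (k + 1)) ∧
      v (k + 1) ∉ R (v (k - 1)) (v k)) →
    ∃ j i : ZMod n, i ≠ j ∧ i ≠ j - 1 ∧ v j ∈ R (v i) (v (i + 1))

def AxP2 (R : V → V → Set V) : Prop :=
  ∀ x y u v p q s t : V,
    Ovl (R x y) (R s t) → Ovl (R u v) (R s t) → Ovl (R p q) (R s t) →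
    R x y ⊆ R u v ∪ R p q ∪ R s t ∨ R u v ⊆ R x y ∪ R p q ∪ R s t ∨
      R p q ⊆ R x y ∪ R u v ∪ R s t

def AxP3 (R : V → V → Set V) : Prop :=
  ∀ x y u v p q s t : V,
    Ovl (R x y) (R u v) → Ovl (R x y) (R p q) → Ovl (R x y) (R s t) →
    R p q ⊆ R u v → R s t ⊆ R u v → (R p q ∩ R s t).Nonempty

def AxP4 (R : V → V → Set V) : Prop :=
  ∀ n : ℕ, 3 ≤ n → ∀ (u v y : V) (x : ℕ → V),
    (∀ i j : ℕ, 1 ≤ i → i ≤ n → 1 ≤ j → j + 1 ≤ n → j ≠ i - 1 → j ≠ i →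
      x i ∉ R (x j) (x (j + 1))) →
    (R u v ∩ R (x 1) (x 2)).Nonempty →
    (R u v ∩ R (x (n - 1)) (x n)).Nonempty →
    (∀ i : ℕ, 1 ≤ i → i + 1 ≤ n → y ∈ R u v \ R (x i) (x (i + 1))) →
    R (x 1) (x 2) ⊆ R u v ∨ R (x (n - 1)) (x n) ⊆ R u v

/-- A weak β-cycle in a set system 𝒞. -/
def HasWeakBetaCycle (𝒞 : Set (Set V)) : Prop :=
  ∃ n : ℕ, 3 ≤ n ∧ ∃ (C : ZMod n → Set V) (x : ZMod n → V),
    (∀ i, C i ∈ 𝒞) ∧ (∀ i, x i ∈ C i ∧ x i ∈ C (i + 1)) ∧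
    (∀ i k : ZMod n, k ≠ i → k ≠ i + 1 → x i ∉ C k)

def TotallyBalanced (𝒞 : Set (Set V)) : Prop := ¬ HasWeakBetaCycle 𝒞

/-- A pure cycle: a weak β-cycle with nonconsecutive sets disjoint. -/
def HasPureCycle (𝒞 : Set (Set V)) : Prop :=
  ∃ n : ℕ, 3 ≤ n ∧ ∃ (C : ZMod n → Set V) (x : ZMod n → V),
    (∀ i, C i ∈ 𝒞) ∧ (∀ i, x i ∈ C i ∧ x i ∈ C (i + 1)) ∧
    (∀ i k : ZMod n, k ≠ i → k ≠ i + 1 → x i ∉ C k) ∧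
    (∀ i j : ZMod n, j ≠ i - 1 → j ≠ i → j ≠ i + 1 → C i ∩ C j = ∅)

def HasGammaTriangle (𝒞 : Set (Set V)) : Prop :=
  ∃ C₁ C₂ C₃ : Set V, C₁ ∈ 𝒞 ∧ C₂ ∈ 𝒞 ∧ C₃ ∈ 𝒞 ∧
    (C₁ ∩ C₂).Nonempty ∧ (C₁ ∩ C₃).Nonempty ∧ (C₂ ∩ C₃).Nonempty ∧
    ∃ u ∈ C₃, ∃ w ∈ C₃, u ∈ C₁ \ C₂ ∧ w ∈ C₂ \ C₁

def GammaAcyclic (𝒞 : Set (Set V)) : Prop :=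
  ¬ HasPureCycle 𝒞 ∧ ¬ HasGammaTriangle 𝒞

def IsHierarchy (𝒞 : Set (Set V)) : Prop :=
  Set.univ ∈ 𝒞 ∧ (∀ x : V, {x} ∈ 𝒞) ∧
    ∀ A ∈ 𝒞, ∀ B ∈ 𝒞, A ∩ B = A ∨ A ∩ B = B ∨ A ∩ B = ∅

def WeakHierarchy (𝒞 : Set (Set V)) : Prop :=
  ∀ A ∈ 𝒞, ∀ B ∈ 𝒞, ∀ C ∈ 𝒞,
    A ∩ B ∩ C = A ∩ B ∨ A ∩ B ∩ C = A ∩ C ∨ A ∩ B ∩ C = B ∩ C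

def AxWPSet (𝒞 : Set (Set V)) : Prop :=
  ∀ A ∈ 𝒞, ∀ B ∈ 𝒞, ∀ C ∈ 𝒞,
    (A ∩ B).Nonempty → (A ∩ C).Nonempty → (B ∩ C).Nonempty →
    A ⊆ B ∪ C ∨ B ⊆ A ∪ C ∨ C ⊆ A ∪ B

def AxISet (𝒞 : Set (Set V)) : Prop :=
  ∀ A ∈ 𝒞, ∀ B ∈ 𝒞, ∀ C ∈ 𝒞,
    (A ∩ B).Nonempty → A ∩ B ⊆ C → (C \ (A ∪ B)).Nonempty →
    A ⊆ C ∨ B ⊆ C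

def AxL1Set (𝒞 : Set (Set V)) : Prop :=
  ∀ A ∈ 𝒞, ∀ B ∈ 𝒞, ∀ C ∈ 𝒞, Ovl A B → Ovl B C →
    A ⊆ C ∨ C ⊆ A ∨ (A ∩ C ⊆ B ∧ B ⊆ A ∪ C)

def AxN3OSet (𝒞 : Set (Set V)) : Prop :=
  ∀ A ∈ 𝒞, ∀ B ∈ 𝒞, ∀ C ∈ 𝒞, Ovl A B → Ovl B C → ¬ Ovl A C

def AxL2'Set (𝒞 : Set (Set V)) : Prop :=
  ∀ A ∈ 𝒞, ∀ B ∈ 𝒞, ∀ C ∈ 𝒞, Ovl A B → Ovl B C → A ∩ C = ∅ →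
    A ∪ B ∪ C ∈ 𝒞

def AxL2''Set (𝒞 : Set (Set V)) : Prop :=
  ∀ A ∈ 𝒞, ∀ B ∈ 𝒞, ∀ C ∈ 𝒞, ∀ D ∈ 𝒞, Ovl A B → Ovl B C → A ∩ C = ∅ →
    (A ∪ C) \ B ⊆ D → A ∪ B ∪ C ⊆ D

theorem union_two {V : Type*} {R : V → V → Set V} (htf : IsTransit R) (hm : IsMonotone R)
    (hu : AxU R) (hw : AxW R) (z a b : V) : ∃ p q, R z a ∪ R z b = R p q := by
  obtain ⟨t1, t2, -⟩ := htf
  rcases hw a b z with h | h | h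
  · exact ⟨a, b, by rw [hu a b z h, t2 a z]⟩
  · rw [t2 a z] at h
    exact ⟨z, a, Set.union_eq_left.2 (hm _ _ _ _ (t1 z a) h)⟩
  · rw [t2 b z] at h
    exact ⟨z, b, Set.union_eq_right.2 (hm _ _ _ _ (t1 z b) h)⟩

/-- Among three vertices seen from `z`, one is redundant: either (w) puts one of `a, b` in the
transit set of `z` and the other (similarly for the other pairs), or `z` lies between every two of
`a, b, c`, and then (w) for `a, b, c` together with (u) at `z` does so. -/
theorem mem_star {V : Type*} {R : V → V → Set V} (htf : IsTransit R)
    (hu : AxU R) (hw : AxW R) (z a b c : V) :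
    c ∈ R z a ∪ R z b ∨ b ∈ R z a ∪ R z c ∨ a ∈ R z b ∪ R z c := by
  obtain ⟨-, t2, -⟩ := htf
  -- A point `c` between `a` and `b` lies in `R z a ∪ R z b`.
  have key : ∀ a b c, z ∈ R a b → c ∈ R a b → c ∈ R z a ∪ R z b := by
    intro a b c hz hc
    rwa [hu a b z hz, t2 a z] at hc
  have pair : ∀ a b, z ∈ R a b ∨ b ∈ R z a ∨ a ∈ R z b := by
    intro a b
    have h := hw a b z
    rwa [t2 a z, t2 b z] at h
  simp only [Set.mem_union] at key ⊢
  rcases pair a b with hab | h | h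
  · rcases pair a c with hac | h | h
    · rcases pair b c with hbc | h | h
      · rcases hw a b c with h | h | h
        · exact Or.inl (key _ _ _ hab h)
        · exact Or.inr (Or.inl (key _ _ _ hac h))
        · exact Or.inr (Or.inr (key _ _ _ hbc h))
      all_goals tauto
    all_goals tauto
  all_goals tauto

theorem union_three {V : Type*} {R : V → V → Set V} (htf : IsTransit R) (hm : IsMonotone R)
    (hu : AxU R) (hw : AxW R) (z a b c : V) :
    ∃ p q, R z a ∪ R z b ∪ R z c = R z p ∪ R z q := by
  have sub : ∀ a b c, c ∈ R z a ∪ R z b → R z c ⊆ R z a ∪ R z b := by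
    rintro a b c (h | h)
    · exact (hm _ _ _ _ (htf.1 z a) h).trans Set.subset_union_left
    · exact (hm _ _ _ _ (htf.1 z b) h).trans Set.subset_union_right
  rcases mem_star htf hu hw z a b c with h | h | h
  · exact ⟨a, b, Set.union_eq_left.2 (sub _ _ _ h)⟩
  · exact ⟨a, c, by rw [Set.union_right_comm]; exact Set.union_eq_left.2 (sub _ _ _ h)⟩
  · exact ⟨b, c, by rw [Set.union_assoc]; exact Set.union_eq_right.2 (sub _ _ _ h)⟩

theorem axU_of_axUC {V : Type*} {R : V → V → Set V} (htf : IsTransit R) (hm : IsMonotone R)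
    (huc : AxUC R) : AxU R := by
  obtain ⟨t1, t2, -⟩ := htf
  have t1' : ∀ u v, v ∈ R u v := fun u v => t2 v u ▸ t1 v u
  intro u v z hz
  apply Set.Subset.antisymm
  · obtain ⟨p, -, q, -, h⟩ := huc u z z v ⟨z, t1' u z, t1 z v⟩
    rw [h]
    exact hm _ _ _ _ (h ▸ Or.inl (t1 u z)) (h ▸ Or.inr (t1' z v))
  · exact Set.union_subset (hm _ _ _ _ (t1 u v) hz) (hm _ _ _ _ hz (t1' u v))

theorem axW_of_axUC {V : Type*} {R : V → V → Set V} (htf : IsTransit R) (hm : IsMonotone R)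
    (huc : AxUC R) : AxW R := by
  obtain ⟨t1, t2, -⟩ := htf
  have t1' : ∀ u v, v ∈ R u v := fun u v => t2 v u ▸ t1 v u
  have triangle : ∀ x y z, R x z ⊆ R x y ∪ R y z := by
    intro x y z
    obtain ⟨p, -, q, -, h⟩ := huc x y y z ⟨y, t1' x y, t1 y z⟩
    rw [h]
    exact hm _ _ _ _ (h ▸ Or.inl (t1 x y)) (h ▸ Or.inr (t1' y z))
  intro x y z
  by_contra! hcon
  obtain ⟨hz, hy, hx⟩ := hcon
  obtain ⟨p, hp, q, hq, h⟩ := huc x y y z ⟨y, t1' x y, t1 y z⟩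
  have hxU : x ∈ R p q := h ▸ Or.inl (t1 x y)
  have hyU : y ∈ R p q := h ▸ Or.inl (t1' x y)
  have hzU : z ∈ R p q := h ▸ Or.inr (t1' y z)
  have nA : ¬ (p ∈ R x y ∧ q ∈ R x y) := fun k => hz (hm _ _ _ _ k.1 k.2 hzU)
  have nB : ¬ (p ∈ R y z ∧ q ∈ R y z) := fun k => hx (hm _ _ _ _ k.1 k.2 hxU)
  have nC : ¬ (p ∈ R x z ∧ q ∈ R x z) := fun k => hy (hm _ _ _ _ k.1 k.2 hyU)
  -- By `triangle`, a point in only one of `R x y`, `R y z` also lies in `R x z`.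
  have hA : ∀ w, w ∈ R x y → w ∈ R x z ∨ w ∈ R y z := by
    intro w hw
    have := triangle x z y hw
    rwa [t2 z y] at this
  have hB : ∀ w, w ∈ R y z → w ∈ R x y ∨ w ∈ R x z := by
    intro w hw
    have := triangle y x z hw
    rwa [t2 y x] at this
  rcases hp with hp | hp <;> rcases hq with hq | hq
  · exact nA ⟨hp, hq⟩
  · rcases hA p hp with hp' | hp'
    · rcases hB q hq with hq' | hq'
      · exact nA ⟨hp, hq'⟩
      · exact nC ⟨hp', hq'⟩
    · exact nB ⟨hp', hq⟩
  · rcases hA q hq with hq' | hq'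
    · rcases hB p hp with hp' | hp'
      · exact nA ⟨hp', hq⟩
      · exact nC ⟨hp', hq'⟩
    · exact nB ⟨hp, hq'⟩
  · exact nB ⟨hp, hq⟩

/-- For a monotone transit function R on a finite nonempty set V,
R satisfies (uc) iff R satisfies (u) and (w). -/
theorem stmt_0 {V : Type*} [Fintype V] [Nonempty V] (R : V → V → Set V)
    (htf : IsTransit R) (hm : IsMonotone R) :
    AxUC R ↔ (AxU R ∧ AxW R) := by
  refine ⟨fun huc => ⟨axU_of_axUC htf hm huc, axW_of_axUC htf hm huc⟩, ?_⟩
  rintro ⟨hu, hw⟩ x y u v ⟨z, hz₁, hz₂⟩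
  have t2 := htf.2.1
  obtain ⟨a, b, hab⟩ := union_three htf hm hu hw z x y u
  obtain ⟨c, d, hcd⟩ := union_three htf hm hu hw z a b v
  obtain ⟨p, q, hpq⟩ := union_two htf hm hu hw z c d
  have h : R x y ∪ R u v = R p q := by
    rw [hu x y z hz₁, hu u v z hz₂, t2 x z, t2 u z, ← Set.union_assoc, hab, hcd, hpq]
  exact ⟨p, h ▸ htf.1 p q, q, h ▸ t2 q p ▸ htf.1 q p, h⟩

end TransitPaper
end

section
/- Let R be a monotone transit function on a finite nonempty set V satisfying axioms (l1) and (l2). Then R is pyramidal, i.e., there is a total order on V with respect to which every transit set R(u,v) is an interval. -/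
/-!
Axiom (l1) excludes three pairwise overlapping transit sets, so two sets overlapping a third one
are nested, or disjoint with the third one inside their union. By (l2) the union of three sets in
the latter position is again a transit set, and the two points it names exclude chordless overlap
cycles of length four. By monotonicity any two points lie in a least transit set. These properties
(`Good`, established in `good_transitSets`) pass to the traces of the family on a subset of the
ground set (`Good.restrict`), so the theorem follows by induction on the ground set `W`
(`Good.step`, `Good.orderable`).

In the induction step, a proper subset `U` of `W` with at least two points that no member overlaps
can be ordered separately and substituted for a single point (`Orderable.substitute`). If there is
no such `U` and some member other than `W` is not a singleton, then the maximal members other than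
`W` contain either three sets `M`, `N`, `T`, overlapping consecutively, with `W` the disjoint union
of `M` and `T` (`Good.orderable_three`), or they are two overlapping sets that cover `W`
(`Pair.orderable`). In both cases there is a member `M` such that the sets overlapping `M` form a
chain, and `W` can be split along `M` (`Good.split`): order `M` together with one outside point `q`
common to all sets overlapping `M`. Since `M` is an interval, `q` comes at an end, hence the sets
overlapping `M` meet it in end segments. The complement of `M` is treated in the same way, and the
two orders are concatenated (`Orderable.concat`). Two small configurations escape this argument
because the sets to be ordered are not smaller than `W`: one of the two maximal sets has only two
points (`Pair.orderable_of_two`), or each of them misses a single point (`Pair.orderable_of_mem`).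
-/

namespace TransitPaper

variable {V : Type*}

/-! ### Families of sets with the properties inherited by restriction -/

/-- The properties of a family `𝒞` of subsets of `W` that drive the induction. They hold for the
transit sets and pass to the traces of `𝒞` on a subset of `W`; the literal form of (l2) does not,
since the two points it names may be lost in the restriction. -/
structure Good (W : Set V) (𝒞 : Set (Set V)) : Prop where
  sub : ∀ S ∈ 𝒞, S ⊆ W
  sing : ∀ x ∈ W, {x} ∈ 𝒞
  pair : ∀ x ∈ W, ∀ y ∈ W, ∃ S ∈ 𝒞, x ∈ S ∧ y ∈ S ∧ ∀ T ∈ 𝒞, x ∈ T → y ∈ T → S ⊆ T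
  nest : ∀ A ∈ 𝒞, ∀ B ∈ 𝒞, ∀ C ∈ 𝒞, Ovl A B → Ovl B C →
    A ⊆ C ∨ C ⊆ A ∨ ((∀ x ∈ A, x ∉ C) ∧ B ⊆ A ∪ C)
  union : ∀ A ∈ 𝒞, ∀ B ∈ 𝒞, ∀ C ∈ 𝒞, Ovl A B → Ovl B C → (∀ x ∈ A, x ∉ C) → A ∪ B ∪ C ∈ 𝒞
  noCycle : ∀ A ∈ 𝒞, ∀ B ∈ 𝒞, ∀ C ∈ 𝒞, ∀ D ∈ 𝒞, Ovl A B → Ovl B C → Ovl C D → Ovl D A →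
    (∀ x ∈ A, x ∉ C) → (∀ x ∈ B, x ∉ D) → False

/-- `f` is injective on `W` and the traces on `W` of all members of `𝒞` are intervals for the
order on `W` that `f` pulls back from `ℤ`. -/
def Fits (𝒞 : Set (Set V)) (W : Set V) (f : V → ℤ) : Prop :=
  Set.InjOn f W ∧ ∀ S ∈ 𝒞, ∀ x ∈ S, ∀ y ∈ S, ∀ w ∈ W, x ∈ W → y ∈ W →
    f x < f w → f w < f y → w ∈ S

/-- Some total order on `W` makes the traces on `W` of all members of `𝒞` intervals. -/
def Orderable (𝒞 : Set (Set V)) (W : Set V) : Prop := ∃ f, Fits 𝒞 W f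

theorem ovl_iff {A B : Set V} : Ovl A B ↔
    (∃ x, x ∈ A ∧ x ∈ B) ∧ (∃ x, x ∈ A ∧ x ∉ B) ∧ ∃ x, x ∈ B ∧ x ∉ A := Iff.rfl

theorem Ovl.symm {A B : Set V} (h : Ovl A B) : Ovl B A := by
  rw [ovl_iff] at *
  grind

theorem Good.restrict {W W' : Set V} {𝒞 : Set (Set V)} (h : Good W 𝒞) (hW : W' ⊆ W) :
    Good W' {T | ∃ S ∈ 𝒞, T = S ∩ W'} := by
  have key : ∀ A B : Set V, Ovl (A ∩ W') (B ∩ W') → Ovl A B := by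
    intro A B hAB
    simp only [ovl_iff, Set.mem_inter_iff] at *
    grind
  -- Disjointness of the traces lifts to the sets themselves when both overlap a common set.
  have dis : ∀ A ∈ 𝒞, ∀ B ∈ 𝒞, ∀ C ∈ 𝒞, Ovl (A ∩ W') (B ∩ W') → Ovl (B ∩ W') (C ∩ W') →
      (∀ x ∈ A ∩ W', x ∉ C ∩ W') → ∀ x ∈ A, x ∉ C := by
    intro A hA B hB C hC h1 h2 h3
    have := h.nest A hA B hB C hC (key _ _ h1) (key _ _ h2)
    simp only [ovl_iff, Set.mem_inter_iff] at *
    grind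
  refine ⟨?_, ?_, ?_, ?_, ?_, ?_⟩
  · rintro _ ⟨S, -, rfl⟩
    exact Set.inter_subset_right
  · intro x hx
    refine ⟨{x}, h.sing x (hW hx), ?_⟩
    ext y
    simp only [Set.mem_inter_iff, Set.mem_singleton_iff]
    grind
  · intro x hx y hy
    obtain ⟨S, hS, hxS, hyS, hm⟩ := h.pair x (hW hx) y (hW hy)
    refine ⟨S ∩ W', ⟨S, hS, rfl⟩, ⟨hxS, hx⟩, ⟨hyS, hy⟩, ?_⟩
    rintro _ ⟨T, hT, rfl⟩ h1 h2
    exact Set.inter_subset_inter_left _ (hm T hT h1.1 h2.1)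
  · rintro _ ⟨A, hA, rfl⟩ _ ⟨B, hB, rfl⟩ _ ⟨C, hC, rfl⟩ h1 h2
    have := h.nest A hA B hB C hC (key _ _ h1) (key _ _ h2)
    clear dis key
    grind
  · rintro _ ⟨A, hA, rfl⟩ _ ⟨B, hB, rfl⟩ _ ⟨C, hC, rfl⟩ h1 h2 h3
    refine ⟨A ∪ B ∪ C, h.union A hA B hB C hC (key _ _ h1) (key _ _ h2)
      (dis A hA B hB C hC h1 h2 h3), ?_⟩
    ext x
    simp only [Set.mem_inter_iff, Set.mem_union]
    tauto
  · rintro _ ⟨A, hA, rfl⟩ _ ⟨B, hB, rfl⟩ _ ⟨C, hC, rfl⟩ _ ⟨D, hD, rfl⟩ h1 h2 h3 h4 h5 h6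
    exact h.noCycle A hA B hB C hC D hD (key _ _ h1) (key _ _ h2) (key _ _ h3) (key _ _ h4)
      (dis A hA B hB C hC h1 h2 h5) (dis B hB C hC D hD h2 h3 h6)

theorem Orderable.of_restrict {W' : Set V} {𝒞 : Set (Set V)}
    (h : Orderable {T | ∃ S ∈ 𝒞, T = S ∩ W'} W') : Orderable 𝒞 W' := by
  obtain ⟨f, hf, hi⟩ := h
  refine ⟨f, hf, fun S hS x hx y hy w hw hxW hyW h1 h2 => ?_⟩
  exact (hi (S ∩ W') ⟨S, hS, rfl⟩ x ⟨hx, hxW⟩ y ⟨hy, hyW⟩ w hw hxW hyW h1 h2).1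

/-- The transit sets of a monotone transit function with (l1) and (l2) form a good family. The
witnesses `s`, `t` in (l2) exclude the chordless overlap cycles of length four: both would lie in
the fourth set, which would then contain the second. -/
theorem good_transitSets (R : V → V → Set V) (htf : IsTransit R) (hm : IsMonotone R)
    (hl1 : AxL1 R) (hl2 : AxL2 R) : Good Set.univ (transitSets R) := by
  obtain ⟨t1, t2, t3⟩ := htf
  have nest : ∀ A ∈ transitSets R, ∀ B ∈ transitSets R, ∀ C ∈ transitSets R, Ovl A B → Ovl B C →
      A ⊆ C ∨ C ⊆ A ∨ ((∀ x ∈ A, x ∉ C) ∧ B ⊆ A ∪ C) := by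
    rintro _ ⟨x, y, rfl⟩ _ ⟨p, q, rfl⟩ _ ⟨u, v, rfl⟩ h1 h2
    by_cases hAC : Ovl (R x y) (R u v)
    · -- Three pairwise overlapping sets contradict (l1) used with each of them in the middle.
      have a1 := hl1 _ _ _ _ _ _ h1 h2
      have a2 := hl1 _ _ _ _ _ _ h1.symm hAC
      have a3 := hl1 _ _ _ _ _ _ hAC h2.symm
      rw [ovl_iff] at *
      clear t1 t2 t3 hm hl1 hl2
      generalize R x y = A at *
      generalize R p q = B at *
      generalize R u v = C at *
      grind
    · have a1 := hl1 _ _ _ _ _ _ h1 h2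
      rw [ovl_iff] at hAC
      clear t1 t2 t3 hm hl1 hl2
      generalize R x y = A at *
      generalize R p q = B at *
      generalize R u v = C at *
      grind
  refine ⟨fun _ _ => Set.subset_univ _, fun x _ => ⟨x, x, (t3 x).symm⟩, ?_, nest, ?_, ?_⟩
  · intro x _ y _
    refine ⟨R x y, ⟨x, y, rfl⟩, t1 x y, t2 x y ▸ t1 y x, ?_⟩
    rintro _ ⟨u, v, rfl⟩ h1 h2
    exact hm u v x y h1 h2
  · rintro _ ⟨x, y, rfl⟩ _ ⟨p, q, rfl⟩ _ ⟨u, v, rfl⟩ h1 h2 h3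
    obtain ⟨s, _, t, _, h⟩ := hl2 _ _ _ _ _ _ h1 h2 (by
      ext z
      simpa using h3 z)
    exact ⟨s, t, h⟩
  · intro A hA B hB C hC D hD h1 h2 h3 h4 h5 h6
    have n1 := nest D hD A hA B hB h4 h1
    have n2 := nest B hB C hC D hD h2 h3
    obtain ⟨x, y, rfl⟩ := hA
    obtain ⟨p, q, rfl⟩ := hB
    obtain ⟨u, v, rfl⟩ := hC
    obtain ⟨m, n, rfl⟩ := hD
    obtain ⟨s, hs, t, ht, h⟩ := hl2 _ _ _ _ _ _ h1 h2 (by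
      ext z
      simpa using h5 z)
    have hsub := hm m n s t
    rw [← h] at hsub
    rw [ovl_iff] at *
    clear t1 t2 t3 hm hl1 hl2 nest
    generalize R x y = A at *
    generalize R p q = B at *
    generalize R u v = C at *
    generalize R m n = D at *
    grind

/-! ### Manipulating orders -/

theorem Fits.neg {𝒞 : Set (Set V)} {W : Set V} {f : V → ℤ} (h : Fits 𝒞 W f) :
    Fits 𝒞 W (fun x => - f x) := by
  refine ⟨fun x hx y hy hxy => h.1 hx hy (by simpa using hxy), ?_⟩
  intro S hS x hx y hy w hw hxW hyW h1 h2
  exact h.2 S hS y hy x hx w hw hyW hxW (by simpa using h2) (by simpa using h1)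

/-- If the trace of some member of `𝒞` on `X` is `X` without the point `q`, then `q` is an end of
every order on `X`. -/
theorem Orderable.exists_min {𝒞 : Set (Set V)} {X S : Set V} {q : V} (h : Orderable 𝒞 X)
    (hS : S ∈ 𝒞) (hq : q ∈ X) (hqS : q ∉ S) (hXS : ∀ x ∈ X, x ≠ q → x ∈ S) :
    ∃ f, Fits 𝒞 X f ∧ ∀ x ∈ X, x ≠ q → f q < f x := by
  obtain ⟨f, hf⟩ := h
  by_cases hmin : ∀ x ∈ X, x ≠ q → f q < f x
  · exact ⟨f, hf, hmin⟩
  · push Not at hmin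
    obtain ⟨x, hx, hxq, hfx⟩ := hmin
    refine ⟨fun x => - f x, hf.neg, fun y hy hyq => ?_⟩
    have h1 := hf.1 hx hq
    have h2 := hf.1 hy hq
    have h3 := hf.2 S hS x (hXS x hx hxq) y (hXS y hy hyq) q hq hx hy
    show - f q < - f y
    grind

theorem Orderable.exists_max {𝒞 : Set (Set V)} {X S : Set V} {q : V} (h : Orderable 𝒞 X)
    (hS : S ∈ 𝒞) (hq : q ∈ X) (hqS : q ∉ S) (hXS : ∀ x ∈ X, x ≠ q → x ∈ S) :
    ∃ f, Fits 𝒞 X f ∧ ∀ x ∈ X, x ≠ q → f x < f q := by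
  obtain ⟨f, hf, hmin⟩ := h.exists_min hS hq hqS hXS
  exact ⟨fun x => - f x, hf.neg, fun x hx hxq => by simpa using hmin x hx hxq⟩

theorem exists_abs_lt [Finite V] (f : V → ℤ) : ∃ K, ∀ x, |f x| < K := by
  obtain ⟨K, hK⟩ := (Set.finite_range fun x => |f x|).bddAbove
  exact ⟨K + 1, fun x => Int.lt_add_one_of_le (hK ⟨x, rfl⟩)⟩

theorem Fits.subset {𝒞 : Set (Set V)} {W W' : Set V} {f : V → ℤ} (h : Fits 𝒞 W f)
    (hW : W' ⊆ W) : Fits 𝒞 W' f :=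
  ⟨h.1.mono hW, fun S hS x hx y hy w hw hxW hyW =>
    h.2 S hS x hx y hy w (hW hw) (hW hxW) (hW hyW)⟩

/-- Concatenation of an order on `X` and an order on `Y`: it suffices that the sets meeting both
parts end `X` and begin `Y`. -/
theorem Orderable.concat [Finite V] {𝒞 : Set (Set V)} {W X Y : Set V} {f g : V → ℤ}
    (hW : W ⊆ X ∪ Y) (hf : Fits 𝒞 X f) (hg : Fits 𝒞 Y g)
    (hup : ∀ S ∈ 𝒞, ∀ x ∈ S, ∀ y ∈ S, x ∈ X → y ∈ Y → y ∉ X → ∀ w ∈ X, f x < f w → w ∈ S)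
    (hlow : ∀ S ∈ 𝒞, ∀ x ∈ S, ∀ y ∈ S, x ∈ X → y ∈ Y → y ∉ X → ∀ w ∈ Y, w ∉ X → g w < g y →
      w ∈ S) :
    Orderable 𝒞 W := by
  classical
  obtain ⟨K, hK⟩ := exists_abs_lt f
  obtain ⟨L, hL⟩ := exists_abs_lt g
  have hK1 : ∀ x, f x < K := fun x => (abs_lt.mp (hK x)).2
  have hL1 : ∀ x, - L < g x := fun x => (abs_lt.mp (hL x)).1
  have hlt : ∀ x y, f x < g y + (K + L) := fun x y => by linarith [hK1 x, hL1 y]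
  generalize K + L = N at hlt
  clear hK hL hK1 hL1
  refine ⟨fun x => if x ∈ X then f x else g x + N, ?_, ?_⟩
  · intro x hx y hy hxy
    have h1 := hW hx
    have h2 := hW hy
    have h3 := @hf.1 x
    have h4 := @hg.1 x
    have h5 := hlt x y
    have h6 := hlt y x
    dsimp only at hxy
    clear hup hlow hf hg hlt
    grind
  · intro S hS x hx y hy w hw hxW hyW h1 h2
    have i1 := hW hw
    have i2 := hW hxW
    have i3 := hW hyW
    dsimp only at h1 h2
    have j1 := hf.2 S hS x hx y hy w
    have j2 := hg.2 S hS x hx y hy w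
    have j3 := hup S hS x hx y hy
    have j4 := hlow S hS x hx y hy
    have k1 := hlt y w
    have k2 := hlt w x
    have k3 := hlt y x
    clear hup hlow hf hg hlt
    grind

/-- Substitution: if no member of `𝒞` overlaps `U`, an order on `U` may replace the point `m` in an
order on `W` with `U` shrunk to `m`. -/
theorem Orderable.substitute [Finite V] {𝒞 : Set (Set V)} {W U : Set V}
    (ih : ∀ W', W' ⊂ W → Orderable 𝒞 W') (hUW : U ⊂ W) {m n : V} (hm : m ∈ U) (hn : n ∈ U)
    (hmn : m ≠ n) (hU : ∀ S ∈ 𝒞, ¬ Ovl S U) : Orderable 𝒞 W := by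
  classical
  obtain ⟨f, hf⟩ := ih U hUW
  obtain ⟨g, hg⟩ := ih {x | x ∈ W ∧ (x ∈ U → x = m)} (by
    refine ⟨fun x hx => hx.1, fun h => hmn ?_⟩
    exact ((h (hUW.1 hn)).2 hn).symm)
  obtain ⟨K, hK⟩ := exists_abs_lt f
  have hK1 : ∀ x, f x < K := fun x => (abs_lt.mp (hK x)).2
  have hK2 : ∀ x, - K < f x := fun x => (abs_lt.mp (hK x)).1
  -- Points of `U` get values within distance `K` of the value of `m`; all others are multiples of
  -- `2 * K`.
  set h : V → ℤ := fun x => if x ∈ U then 2 * K * g m + f x else 2 * K * g x with hdef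
  have hin : ∀ x ∈ U, h x = 2 * K * g m + f x := fun x hx => by simp [hdef, hx]
  have hout : ∀ x, x ∉ U → h x = 2 * K * g x := fun x hx => by simp [hdef, hx]
  have hK0 : 0 < K := by linarith [hK1 m, hK2 m]
  have c1 : ∀ x ∈ U, ∀ y ∉ U, h x ≤ h y → g m ≤ g y := by
    intro x hx y hy hxy
    rw [hin x hx, hout y hy] at hxy
    by_contra hle
    have : g y + 1 ≤ g m := by omega
    nlinarith [hK1 x, hK2 x]
  have c2 : ∀ x ∈ U, ∀ y ∉ U, h y ≤ h x → g y ≤ g m := by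
    intro x hx y hy hxy
    rw [hin x hx, hout y hy] at hxy
    by_contra hle
    have : g m + 1 ≤ g y := by omega
    nlinarith [hK1 x, hK2 x]
  have c3 : ∀ x ∉ U, ∀ y ∉ U, h x ≤ h y → g x ≤ g y := by
    intro x hx y hy hxy
    rw [hout x hx, hout y hy] at hxy
    by_contra hle
    nlinarith
  have c4 : ∀ x ∈ U, ∀ y ∈ U, h x ≤ h y → f x ≤ f y := by
    intro x hx y hy hxy
    rw [hin x hx, hin y hy] at hxy
    linarith
  have ginj : ∀ x ∈ W, ∀ y ∈ W, (x ∈ U → x = m) → (y ∈ U → y = m) → g x = g y → x = y :=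
    fun x hx y hy h1 h2 h3 => hg.1 ⟨hx, h1⟩ ⟨hy, h2⟩ h3
  have hmW : m ∈ W := hUW.1 hm
  clear_value h
  refine ⟨h, ?_, ?_⟩
  · intro x hx y hy hxy
    have d1 := hxy.le
    have d2 := hxy.ge
    have finj := @hf.1 x
    clear hdef hin hout ih hf hg hU
    by_cases hxU : x ∈ U <;> by_cases hyU : y ∈ U
    · exact finj hxU hyU (le_antisymm (c4 x hxU y hyU d1) (c4 y hyU x hxU d2))
    · have := ginj m hmW y hy (fun _ => rfl) (fun h => absurd h hyU)
        (le_antisymm (c1 x hxU y hyU d1) (c2 x hxU y hyU d2))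
      grind
    · have := ginj m hmW x hx (fun _ => rfl) (fun h => absurd h hxU)
        (le_antisymm (c1 y hyU x hxU d2) (c2 y hyU x hxU d1))
      grind
    · exact ginj x hx y hy (fun h => absurd h hxU) (fun h => absurd h hyU)
        (le_antisymm (c3 x hxU y hyU d1) (c3 y hyU x hxU d2))
  · intro S hS x hx y hy w hw hxW hyW h1 h2
    have hSU := hU S hS
    have fi := hf.2 S hS x hx y hy w
    have finj1 := fun hx hw => @hf.1 x hx w hw
    have finj2 := fun hw hy => @hf.1 w hw y hy
    -- `r` sends `U` to `m` and fixes all other points.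
    set r : V → V := fun z => if z ∈ U then m else z with hr
    have r1 : ∀ z ∈ U, r z = m := fun z hz => by simp [hr, hz]
    have r2 : ∀ z, z ∉ U → r z = z := fun z hz => by simp [hr, hz]
    clear_value r
    have rQ : ∀ z ∈ W, r z ∈ W ∧ (r z ∈ U → r z = m) := by
      intro z hz
      by_cases hzU : z ∈ U <;> grind
    have mono : ∀ a b, h a ≤ h b → g (r a) ≤ g (r b) := by
      intro a b hab
      by_cases ha : a ∈ U <;> by_cases hb : b ∈ U
      · rw [r1 a ha, r1 b hb]
      · rw [r1 a ha, r2 b hb]; exact c1 a ha b hb hab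
      · rw [r2 a ha, r1 b hb]; exact c2 b hb a ha hab
      · rw [r2 a ha, r2 b hb]; exact c3 a ha b hb hab
    have m1 := mono x w h1.le
    have m2 := mono w y h2.le
    have gi : r x ∈ S → r y ∈ S → g (r x) < g (r w) → g (r w) < g (r y) → r w ∈ S :=
      fun a b => hg.2 S hS (r x) a (r y) b (r w) (rQ w hw) (rQ x hxW) (rQ y hyW)
    have e1 : g (r x) = g (r w) → r x = r w := fun h => hg.1 (rQ x hxW) (rQ w hw) h
    have e2 : g (r w) = g (r y) → r w = r y := fun h => hg.1 (rQ w hw) (rQ y hyW) h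
    have n1 : x ≠ w := by rintro rfl; exact lt_irrefl _ h1
    have n2 : w ≠ y := by rintro rfl; exact lt_irrefl _ h2
    have f1 : x ∈ U → w ∈ U → f x ≤ f w := fun a b => c4 x a w b h1.le
    have f2 : w ∈ U → y ∈ U → f w ≤ f y := fun a b => c4 w a y b h2.le
    have rx1 := r1 x
    have rx2 := r2 x
    have ry1 := r1 y
    have ry2 := r2 y
    have rw1 := r1 w
    have rw2 := r2 w
    clear hdef hin hout ih hf hg hU c1 c2 c3 c4 mono r1 r2 rQ hr ginj hK hK1 hK2 h1 h2
    have tri : (∀ z ∈ S, z ∉ U) ∨ S ⊆ U ∨ U ⊆ S := by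
      rw [ovl_iff] at hSU
      grind
    clear hSU
    by_cases hwU : w ∈ U
    · by_cases hxU : x ∈ U <;> by_cases hyU : y ∈ U <;> grind
    · by_cases hxU : x ∈ U <;> by_cases hyU : y ∈ U <;> grind

/-! ### Splitting along a member whose overlapping sets form a chain -/

theorem exists_maximal_mem [Finite V] {𝒟 : Set (Set V)} {S : Set V} (hS : S ∈ 𝒟) :
    ∃ M ∈ 𝒟, S ⊆ M ∧ ∀ T ∈ 𝒟, M ⊆ T → T ⊆ M := by
  obtain ⟨M, hSM, hM⟩ := (Set.toFinite 𝒟).exists_le_maximal hS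
  exact ⟨M, hM.1, hSM, fun T hT h => hM.2 hT h⟩

theorem exists_minimal_mem [Finite V] {𝒟 : Set (Set V)} {S : Set V} (hS : S ∈ 𝒟) :
    ∃ M ∈ 𝒟, ∀ T ∈ 𝒟, T ⊆ M → M ⊆ T := by
  obtain ⟨M, hSM, hM⟩ := (Set.toFinite 𝒟).exists_le_minimal hS
  exact ⟨M, hM.1, fun T hT h => hM.2 hT h⟩

/-- The sets overlapping `M` are assumed to form a nonempty chain. All of them then contain a point
`p` of `M` and a point `q` outside `M`. In an order of `M ∪ {q}` the point `q` is an end, because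
`M` is an interval, so these sets cut `M` in end segments; `hY` does the same for the outside. -/
theorem Good.split [Finite V] {W : Set V} {𝒞 : Set (Set V)} (hG : Good W 𝒞)
    (ih : ∀ W', W' ⊂ W → Orderable 𝒞 W') {M C₀ : Set V} (hM : M ∈ 𝒞) (hC₀ : C₀ ∈ 𝒞)
    (hC₀M : Ovl C₀ M)
    (hchain : ∀ C ∈ 𝒞, ∀ D ∈ 𝒞, Ovl C M → Ovl D M → C ⊆ D ∨ D ⊆ C)
    (htwo : ∀ q, ∃ y ∈ W, y ∉ M ∧ y ≠ q)
    (hY : ∀ p ∈ M, (∀ C ∈ 𝒞, Ovl C M → p ∈ C) →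
      ∃ g, Fits 𝒞 {x | x ∈ W ∧ (x ∈ M → x = p)} g ∧ ∀ x ∈ W, x ∉ M → g p < g x) :
    Orderable 𝒞 W := by
  obtain ⟨C, ⟨hC, hCM⟩, hmin⟩ :=
    exists_minimal_mem (𝒟 := {C | C ∈ 𝒞 ∧ Ovl C M}) (S := C₀) ⟨hC₀, hC₀M⟩
  have hCall : ∀ D ∈ 𝒞, Ovl D M → C ⊆ D := fun D hD hDM =>
    (hchain C hC D hD hCM hDM).elim id (fun h => hmin D ⟨hD, hDM⟩ h)
  obtain ⟨p, hpC, hpM⟩ := hCM.1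
  obtain ⟨q, hqC, hqM⟩ := hCM.2.1
  obtain ⟨g, hg, hgmin⟩ := hY p hpM (fun D hD hDM => hCall D hD hDM hpC)
  have hqW := hG.sub C hC hqC
  have hMW := hG.sub M hM
  obtain ⟨f, hf, hfmax⟩ := (ih {x | x ∈ M ∨ x = q} (by
    refine ⟨?_, fun h => ?_⟩
    · rintro x (hx | rfl)
      exacts [hMW hx, hqW]
    · obtain ⟨y, hy, hyM, hyq⟩ := htwo q
      exact (h hy).elim hyM hyq)).exists_max hM (Or.inr rfl) hqM
        (fun x hx hxq => hx.resolve_right hxq)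
  have hgY := hg.subset (W' := W \ M) (fun x hx => ⟨hx.1, fun h => absurd h hx.2⟩)
  have hfX := hf.subset (W' := M) (fun x hx => Or.inl hx)
  have quad : ∀ S ∈ 𝒞, ∀ x ∈ S, ∀ y ∈ S, x ∈ M → y ∉ M → M ⊆ S ∨ Ovl S M := by
    intro S hS x hx y hy hxM hyM
    rw [ovl_iff]
    grind
  refine Orderable.concat (X := M) (Y := W \ M) (f := f) (g := g) ?_ hfX hgY ?_ ?_
  · intro x hx
    by_cases hxM : x ∈ M
    exacts [Or.inl hxM, Or.inr ⟨hx, hxM⟩]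
  · intro S hS x hx y hy hxM hyW hyM w hw hlt
    rcases quad S hS x hx y hy hxM hyM with h | h
    · exact h hw
    · have hqS := hCall S hS h hqC
      exact hf.2 S hS x hx q hqS w (Or.inl hw) (Or.inl hxM) (Or.inr rfl) hlt
        (hfmax w (Or.inl hw) (fun h => hqM (h ▸ hw)))
  · intro S hS x hx y hy hxM hyW hyM w hw hwM hlt
    have hpS : p ∈ S := by
      rcases quad S hS x hx y hy hxM hyM with h | h
      · exact h hpM
      · exact hCall S hS h hpC
    exact hg.2 S hS p hpS y hy w ⟨hw.1, fun h => absurd h hwM⟩ ⟨hMW hpM, fun _ => rfl⟩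
      ⟨hyW.1, fun h => absurd h hyM⟩ (hgmin w hw.1 hwM) hlt

/-- The case of `Good.split` where the complement of `M` lies in a set `N` overlapping `M`. Shrinking
`M` to a point of `M \ N` and a point of `M ∩ N` leaves enough sets to pin these two points at the
end; `hthird` makes the shrunken set smaller than `W`. -/
theorem Good.split_of_cover [Finite V] {W : Set V} {𝒞 : Set (Set V)} (hG : Good W 𝒞)
    (ih : ∀ W', W' ⊂ W → Orderable 𝒞 W') {M N : Set V} (hM : M ∈ 𝒞) (hN : N ∈ 𝒞)
    (hNM : Ovl N M) (hcov : ∀ x ∈ W, x ∉ M → x ∈ N)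
    (hchain : ∀ C ∈ 𝒞, ∀ D ∈ 𝒞, Ovl C M → Ovl D M → C ⊆ D ∨ D ⊆ C)
    (htwo : ∀ q, ∃ y ∈ W, y ∉ M ∧ y ≠ q)
    {p₀ : V} (hp₀ : p₀ ∈ M) (hp₀N : p₀ ∉ N)
    (hthird : ∀ p ∈ M, p ∈ N → ∃ z ∈ M, z ≠ p₀ ∧ z ≠ p) :
    Orderable 𝒞 W := by
  refine hG.split ih hM hN hNM hchain htwo ?_
  intro p hp hall
  have hpN := hall N hN hNM
  have hMW := hG.sub M hM
  have hpp : p ≠ p₀ := by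
    rintro rfl
    exact hp₀N hpN
  obtain ⟨g, hg, hmin⟩ := (ih {x | x ∈ W ∧ (x ∈ M → x = p₀ ∨ x = p)} (by
    refine ⟨fun x hx => hx.1, fun h => ?_⟩
    obtain ⟨z, hz, h1, h2⟩ := hthird p hp hpN
    exact ((h (hMW hz)).2 hz).elim h1 h2)).exists_min hN (q := p₀)
      ⟨hMW hp₀, fun _ => Or.inl rfl⟩ hp₀N (by
        rintro x ⟨hx, hx'⟩ hne
        by_cases hxM : x ∈ M
        · rw [(hx' hxM).resolve_left hne]
          exact hpN
        · exact hcov x hx hxM)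
  refine ⟨g, hg.subset fun x hx => ⟨hx.1, fun h => Or.inr (hx.2 h)⟩, fun x hx hxM => ?_⟩
  have hxp₀ : x ≠ p₀ := fun h => hxM (h ▸ hp₀)
  have hxX : x ∈ {x | x ∈ W ∧ (x ∈ M → x = p₀ ∨ x = p)} := ⟨hx, fun h => absurd h hxM⟩
  have hpX : p ∈ {x | x ∈ W ∧ (x ∈ M → x = p₀ ∨ x = p)} := ⟨hMW hp, fun _ => Or.inr rfl⟩
  by_contra hle
  rcases lt_or_eq_of_le (not_lt.mp hle) with h | h
  · exact hxM (hg.2 M hM p₀ hp₀ p hp x hxX ⟨hMW hp₀, fun _ => Or.inl rfl⟩ hpX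
      (hmin x hxX hxp₀) h)
  · exact hxM (hg.1 hxX hpX h ▸ hp)

/-- Three sets overlapping consecutively, the outer two partitioning `W`. -/
theorem Good.orderable_three [Finite V] {W : Set V} {𝒞 : Set (Set V)} (hG : Good W 𝒞)
    (ih : ∀ W', W' ⊂ W → Orderable 𝒞 W') {M N T : Set V} (hM : M ∈ 𝒞) (hN : N ∈ 𝒞) (hT : T ∈ 𝒞)
    (hMN : Ovl M N) (hNT : Ovl N T) (hdis : ∀ x ∈ M, x ∉ T) (hcov : W ⊆ M ∪ T) :
    Orderable 𝒞 W := by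
  have hMW := hG.sub M hM
  have hTW := hG.sub T hT
  have hNW := hG.sub N hN
  refine hG.split ih hM hN hMN.symm ?_ ?_ ?_
  · -- Disjoint sets `C`, `D` overlapping `M` would give an overlap cycle `M`, `N`, `T`, `C` or
    -- `M`, `N`, `T`, `D`.
    have cyc : ∀ C ∈ 𝒞, Ovl C M → (∀ x ∈ N, x ∉ C) → False := by
      intro C hC hCM hd
      refine hG.noCycle M hM N hN T hT C hC hMN hNT ?_ hCM hdis hd
      have := hG.sub C hC
      rw [ovl_iff] at *
      grind
    intro C hC D hD hCM hDM
    rcases hG.nest C hC M hM D hD hCM hDM.symm with h | h | ⟨h, h'⟩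
    · exact Or.inl h
    · exact Or.inr h
    · exfalso
      have h1 := hG.nest N hN M hM C hC hMN.symm hCM.symm
      have h2 := hG.nest N hN M hM D hD hMN.symm hDM.symm
      have c1 := cyc C hC hCM
      have c2 := cyc D hD hDM
      clear cyc hG ih
      rw [ovl_iff] at *
      grind
  · obtain ⟨s, hs, hs'⟩ := hNT.1
    obtain ⟨t, ht, ht'⟩ := hNT.2.2
    intro q
    by_cases hq : s = q
    · exact ⟨t, hTW ht, fun h => hdis t h ht, fun h => ht' (h ▸ hq ▸ hs)⟩
    · exact ⟨s, hTW hs', fun h => hdis s h hs', hq⟩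
  · intro p hp hall
    obtain ⟨m, hm, hmN⟩ := hMN.2.1
    have hmp : m ≠ p := fun h => hmN (h ▸ hall N hN hMN.symm)
    obtain ⟨g, hg, hmin⟩ := (ih {x | x ∈ W ∧ (x ∈ M → x = p)} (by
      exact ⟨fun x hx => hx.1, fun h => hmp ((h (hMW hm)).2 hm)⟩)).exists_min hT (q := p)
        ⟨hMW hp, fun _ => rfl⟩ (hdis p hp) (by
          rintro x ⟨hx, hx'⟩ hne
          exact (hcov hx).resolve_left fun h => hne (hx' h))
    exact ⟨g, hg, fun x hx hxM => hmin x ⟨hx, fun h => absurd h hxM⟩ (fun h => hxM (h ▸ hp))⟩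

/-! ### Two maximal members covering the ground set -/

/-- All members of `𝒞` other than `W` lie in `M` or in `N`, and `M`, `N` overlap and cover `W`. -/
structure Pair (W : Set V) (𝒞 : Set (Set V)) (M N : Set V) : Prop where
  left : M ∈ 𝒞
  right : N ∈ 𝒞
  ovl : Ovl M N
  cover : W ⊆ M ∪ N
  inside : ∀ S ∈ 𝒞, S = W ∨ S ⊆ M ∨ S ⊆ N

theorem Pair.symm {W : Set V} {𝒞 : Set (Set V)} {M N : Set V} (h : Pair W 𝒞 M N) :
    Pair W 𝒞 N M :=
  ⟨h.right, h.left, h.ovl.symm, Set.union_comm M N ▸ h.cover,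
    fun S hS => (h.inside S hS).imp_right Or.symm⟩

theorem Pair.chain {W : Set V} {𝒞 : Set (Set V)} {M N : Set V} (hG : Good W 𝒞)
    (h : Pair W 𝒞 M N) :
    ∀ C ∈ 𝒞, ∀ D ∈ 𝒞, Ovl C M → Ovl D M → C ⊆ D ∨ D ⊆ C := by
  intro C hC D hD hCM hDM
  have h1 := hG.nest C hC M h.left D hD hCM hDM.symm
  have h2 := h.inside C hC
  have h3 := h.inside D hD
  have h4 := h.ovl
  have h5 := hG.sub M h.left
  clear hG h
  rw [ovl_iff] at *
  grind

/-- The case `M = {a, p}`. If `W \ {a, p}` is a member, then `p` is an end of `N`. Otherwise the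
largest member `S ≠ N` with `p ∈ S` and `a ∉ S` is overlapped by no member but `M`, so `a`, `S` and
the rest can be placed one after the other. -/
theorem Pair.orderable_of_two [Finite V] {W : Set V} {𝒞 : Set (Set V)} {M N : Set V}
    (hG : Good W 𝒞) (ih : ∀ W', W' ⊂ W → Orderable 𝒞 W') (h : Pair W 𝒞 M N) {a p : V}
    (ha : a ∈ M) (haN : a ∉ N) (hp : p ∈ M) (hpN : p ∈ N) (hM : ∀ x ∈ M, x = a ∨ x = p) :
    Orderable 𝒞 W := by
  obtain ⟨hMC, hNC, hovl, hcov, hins⟩ := h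
  have hMW := hG.sub M hMC
  have hNW := hG.sub N hNC
  have hap : a ≠ p := fun h => haN (h ▸ hpN)
  have hN : ∀ x ∈ W, x ≠ a → x ∈ N := by
    intro x hx hxa
    rcases hcov hx with h | h
    · rw [(hM x h).resolve_left hxa]
      exact hpN
    · exact h
  by_cases hQ : ∃ Q ∈ 𝒞, ∀ x, x ∈ Q ↔ x ∈ W ∧ x ≠ a ∧ x ≠ p
  · obtain ⟨Q, hQC, hQ⟩ := hQ
    obtain ⟨f, hf, hmin⟩ := (ih N ⟨hNW, fun h => haN (h (hMW ha))⟩).exists_min hQC hpN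
      (fun h => ((hQ p).1 h).2.2 rfl)
      (fun x hx hxp => (hQ x).2 ⟨hNW hx, fun h => haN (h ▸ hx), hxp⟩)
    refine Orderable.concat (X := {a}) (Y := N) (f := f) (g := f) ?_ ?_ hf ?_ ?_
    · intro x hx
      by_cases hxa : x = a
      exacts [Or.inl hxa, Or.inr (hN x hx hxa)]
    · refine ⟨Set.injOn_singleton f a, ?_⟩
      rintro S hS x hx y hy w rfl rfl hyW h1 h2
      exact hx
    · rintro S hS x hx y hy rfl hyN hya w rfl hlt
      exact hx
    · rintro S hS x hx y hy rfl hyN hya w hw hwa hlt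
      rcases hins S hS with rfl | h | h
      · exact hNW hw
      · have : y = p := (hM y (h hy)).resolve_left hya
        subst this
        by_cases hwy : w = y
        · exact hwy ▸ hy
        · exact absurd hlt (not_lt.mpr (hmin w hw hwy).le)
      · exact absurd (h hx) haN
  · have hpW := hNW hpN
    obtain ⟨n, hn, hnM⟩ := hovl.2.2
    obtain ⟨S, ⟨hS, hpS, haS, hSN⟩, -, hmax⟩ := exists_maximal_mem
      (𝒟 := {S | S ∈ 𝒞 ∧ p ∈ S ∧ a ∉ S ∧ S ≠ N}) (S := {p})
      ⟨hG.sing p hpW, rfl, hap, fun h => by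
        have h' : n ∈ ({p} : Set V) := h ▸ hn
        exact hnM (h' ▸ hp)⟩
    have hSW := hG.sub S hS
    have hSN' : S ⊆ N := fun x hx => hN x (hSW hx) (fun h => haS (h ▸ hx))
    -- `N` is the only member inside `N` that meets `S` and is not contained in it.
    have key : ∀ T ∈ 𝒞, a ∉ T → ∀ x ∈ T, x ∈ S → ∀ y ∈ T, y ∉ S → T = N := by
      intro T hT haT x hxT hxS y hyT hyS
      by_contra hTN
      by_cases hST : S ⊆ T
      · exact hyS (hmax T ⟨hT, hST hpS, haT, hTN⟩ hST hyT)
      · obtain ⟨z, hzS, hzT⟩ := Set.not_subset.mp hST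
        have hTS : Ovl T S := ⟨⟨x, hxT, hxS⟩, ⟨y, hyT, hyS⟩, ⟨z, hzS, hzT⟩⟩
        by_cases hpT : p ∈ T
        · have hzp : z ≠ p := fun h => hzT (h ▸ hpT)
          have hyp : y ≠ p := fun h => hyS (h ▸ hpS)
          have o1 : Ovl S M := ⟨⟨p, hpS, hp⟩, ⟨z, hzS, by grind⟩, ⟨a, ha, haS⟩⟩
          have o2 : Ovl T M := ⟨⟨p, hpT, hp⟩, ⟨y, hyT, by grind⟩, ⟨a, ha, haT⟩⟩
          rcases hG.nest S hS M hMC T hT o1 o2.symm with h | h | h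
          · exact hzT (h hzS)
          · exact hyS (h hyT)
          · exact h.1 p hpS hpT
        · have hxp : x ≠ p := fun h => hpT (h ▸ hxT)
          have o1 : Ovl S M := ⟨⟨p, hpS, hp⟩, ⟨x, hxS, by grind⟩, ⟨a, ha, haS⟩⟩
          have hd : ∀ x ∈ T, x ∉ M := by grind
          have hU := hG.union T hT S hS M hMC hTS o1 hd
          have hU' : T ∪ S ∪ M = W := by
            rcases hins _ hU with h | h | h
            · exact h
            · exact absurd (h (Or.inl (Or.inl hxT))) (hd x hxT)
            · exact absurd (h (Or.inr ha)) haN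
          have hcov' : S ⊆ T ∪ M := by
            rcases hG.nest T hT S hS M hMC hTS o1 with h | h | h
            · exact absurd (h hxT) (hd x hxT)
            · exact absurd (h hp) hpT
            · exact h.2
          refine hQ ⟨T, hT, fun x => ⟨fun hx => ⟨hG.sub T hT hx, ?_, ?_⟩, ?_⟩⟩
          · rintro rfl
            exact haT hx
          · rintro rfl
            exact hpT hx
          · rintro ⟨hxW, h1, h2⟩
            have hxM : x ∉ M := fun h => (hM x h).elim h1 h2
            rw [← hU'] at hxW
            rcases hxW with (h | h) | h
            · exact h
            · exact (hcov' h).resolve_right hxM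
            · exact absurd h hxM
    obtain ⟨z, hzN, hzS⟩ : ∃ z ∈ N, z ∉ S := by
      by_contra hno
      push Not at hno
      exact hSN (Set.Subset.antisymm hSN' hno)
    obtain ⟨f, hf, hmin⟩ := (ih {x | x = a ∨ x ∈ S} (by
      refine ⟨?_, fun h => ?_⟩
      · rintro x (rfl | hx)
        exacts [hMW ha, hSW hx]
      · rcases h (hNW hzN) with h | h
        · exact haN (h ▸ hzN)
        · exact hzS h)).exists_min hS (q := a) (Or.inl rfl) haS
          (fun x hx hxa => hx.resolve_left hxa)
    obtain ⟨g, hg⟩ := ih (W \ {x | x = a ∨ x ∈ S}) (by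
      exact ⟨fun x hx => hx.1, fun h => (h (hMW ha)).2 (Or.inl rfl)⟩)
    -- A member meeting both `{a} ∪ S` and its complement is `W` or `N`.
    have cross : ∀ T ∈ 𝒞, ∀ x ∈ T, ∀ y ∈ T, (x = a ∨ x ∈ S) → ¬ (y = a ∨ y ∈ S) →
        T = W ∨ T = N := by
      intro T hT x hx y hy hxX hyX
      by_cases haT : a ∈ T
      · rcases hins T hT with h | h | h
        · exact Or.inl h
        · rcases hM y (h hy) with h | h
          · exact absurd (Or.inl h) hyX
          · exact absurd (Or.inr (h ▸ hpS)) hyX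
        · exact absurd (h haT) haN
      · rcases hxX with rfl | hxS
        · exact absurd hx haT
        · exact Or.inr (key T hT haT x hx hxS y hy fun h => hyX (Or.inr h))
    refine Orderable.concat (X := {x | x = a ∨ x ∈ S}) (Y := W \ {x | x = a ∨ x ∈ S})
      (f := f) (g := g) ?_ hf hg ?_ ?_
    · intro x hx
      by_cases hxX : x ∈ {x | x = a ∨ x ∈ S}
      exacts [Or.inl hxX, Or.inr ⟨hx, hxX⟩]
    · intro T hT x hx y hy hxX hyY hyX w hw hlt
      rcases cross T hT x hx y hy hxX hyX with rfl | rfl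
      · rcases hw with rfl | hw
        exacts [hMW ha, hSW hw]
      · rcases hw with rfl | hw
        · by_cases hxw : x = w
          · exact hxw ▸ hx
          · exact absurd hlt (not_lt.mpr (hmin x hxX hxw).le)
        · exact hSN' hw
    · intro T hT x hx y hy hxX hyY hyX w hw hwX hlt
      rcases cross T hT x hx y hy hxX hyX with rfl | rfl
      · exact hw.1
      · exact hN w hw.1 fun h => hwX (Or.inl h)

/-- The case `W \ N = {a}` and `W \ M = {b}`, with a further member `A` containing `a`. If `A` has
three points, `W` splits along `A`. If `A = {a, p}`, then `M ∩ N` is the largest member inside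
`M ∩ N` through `p`, so `a` is an end of `M`, and `b` is placed at the other end. -/
theorem Pair.orderable_of_mem [Finite V] {W : Set V} {𝒞 : Set (Set V)} {M N : Set V}
    (hG : Good W 𝒞) (ih : ∀ W', W' ⊂ W → Orderable 𝒞 W') (h : Pair W 𝒞 M N) {a b : V}
    (ha : a ∈ M) (haN : a ∉ N) (hb : b ∈ N) (hbM : b ∉ M) (hN : ∀ x ∈ W, x ≠ a → x ∈ N)
    (hM : ∀ x ∈ W, x ≠ b → x ∈ M) {A : Set V} (hA : A ∈ 𝒞) (haA : a ∈ A) (hAW : A ≠ W)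
    (hAM : A ≠ M) {p : V} (hpA : p ∈ A) (hpa : p ≠ a) : Orderable 𝒞 W := by
  have hMW := hG.sub M h.left
  have hNW := hG.sub N h.right
  have inM : ∀ C ∈ 𝒞, a ∈ C → C ≠ W → C ⊆ M := by
    intro C hC haC hCW
    rcases h.inside C hC with h' | h' | h'
    exacts [absurd h' hCW, h', absurd (h' haC) haN]
  have hAM' := inM A hA haA hAW
  have hbA : b ∉ A := fun h => hbM (hAM' h)
  have hpN : p ∈ N := hN p (hMW (hAM' hpA)) hpa
  obtain ⟨c, hcM, hcA⟩ : ∃ c ∈ M, c ∉ A := by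
    by_contra hno
    push Not at hno
    exact hAM (Set.Subset.antisymm hAM' hno)
  by_cases hthird : ∃ z ∈ A, z ≠ a ∧ z ≠ p
  · have hANovl : Ovl A N := ⟨⟨p, hpA, hpN⟩, ⟨a, haA, haN⟩, ⟨b, hb, hbA⟩⟩
    -- A member that overlaps `A` and contains `a` overlaps `N`, as `A` does.
    have noa : ∀ C ∈ 𝒞, Ovl C A → a ∉ C := by
      intro C hC hCA haC
      obtain ⟨c, hcC, hcA⟩ := hCA.2.1
      have hCW : C ≠ W := by
        rintro rfl
        obtain ⟨d, hd, hd'⟩ := hCA.2.2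
        exact hd' (hG.sub A hA hd)
      have hCM := inM C hC haC hCW
      have hCN : Ovl C N := ⟨⟨c, hcC, hN c (hG.sub C hC hcC) fun h => hcA (h ▸ haA)⟩,
        ⟨a, haC, haN⟩, ⟨b, hb, fun h => hbM (hCM h)⟩⟩
      rcases h.symm.chain hG C hC A hA hCN hANovl with h' | h'
      · exact hcA (h' hcC)
      · obtain ⟨d, hd, hd'⟩ := hCA.2.2
        exact hd' (h' hd)
    refine hG.split_of_cover ih hA h.right hANovl.symm ?_ ?_ ?_ (p₀ := a) haA haN ?_
    · exact fun x hx hxA => hN x hx fun h => hxA (h ▸ haA)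
    · intro C hC D hD hCA hDA
      rcases hG.nest C hC A hA D hD hCA hDA.symm with h' | h' | h'
      · exact Or.inl h'
      · exact Or.inr h'
      · exact ((h'.2 haA).elim (noa C hC hCA) (noa D hD hDA)).elim
    · intro q
      by_cases hq : b = q
      · exact ⟨c, hMW hcM, hcA, fun h => hbM (hq ▸ h ▸ hcM)⟩
      · exact ⟨b, hNW hb, hbA, hq⟩
    · intro r hr hrN
      obtain ⟨z, hz, hza, hzp⟩ := hthird
      by_cases hzr : z = r
      · exact ⟨p, hpA, hpa, fun h => hzp (hzr.trans h.symm)⟩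
      · exact ⟨z, hz, hza, hzr⟩
  · push Not at hthird
    have hA2 : ∀ z ∈ A, z = a ∨ z = p := fun z hz => by
      by_cases hza : z = a
      exacts [Or.inl hza, Or.inr (hthird z hz hza)]
    have hpM := hAM' hpA
    obtain ⟨P, ⟨hP, hpP, hPM, hPN⟩, -, hmax⟩ := exists_maximal_mem
      (𝒟 := {S | S ∈ 𝒞 ∧ p ∈ S ∧ S ⊆ M ∧ S ⊆ N}) (S := {p})
      ⟨hG.sing p (hNW hpN), rfl, by simpa using hpM, by simpa using hpN⟩
    have hPall : ∀ x ∈ M, x ∈ N → x ∈ P := by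
      intro x hxM hxN
      by_contra hxP
      obtain ⟨T, hT, hpT, hxT, hTmin⟩ := hG.pair p (hNW hpN) x (hNW hxN)
      have hTM := hTmin M h.left hpM hxM
      have hTN := hTmin N h.right hpN hxN
      by_cases hPT : P ⊆ T
      · exact hxP (hmax T ⟨hT, hpT, hTM, hTN⟩ hPT hxT)
      · obtain ⟨y, hyP, hyT⟩ := Set.not_subset.mp hPT
        have o1 : Ovl P A := ⟨⟨p, hpP, hpA⟩, ⟨y, hyP, fun h => by
          rcases hA2 y h with rfl | rfl
          exacts [haN (hPN hyP), hyT hpT]⟩, ⟨a, haA, fun h => haN (hPN h)⟩⟩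
        have o2 : Ovl A T := ⟨⟨p, hpA, hpT⟩, ⟨a, haA, fun h => haN (hTN h)⟩, ⟨x, hxT, fun h => by
          rcases hA2 x h with rfl | rfl
          exacts [haN hxN, hxP hpP]⟩⟩
        rcases hG.nest P hP A hA T hT o1 o2 with h' | h' | h'
        · exact hPT h'
        · exact hxP (h' hxT)
        · exact h'.1 p hpP hpT
    obtain ⟨f, hf, hmin⟩ := (ih M ⟨hMW, fun h => hbM (h (hNW hb))⟩).exists_min hP ha
      (fun h => haN (hPN h)) (fun x hx hxa => hPall x hx (hN x (hMW hx) hxa))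
    refine Orderable.concat (X := M) (Y := {b}) (f := f) (g := f) ?_ hf ?_ ?_ ?_
    · intro x hx
      by_cases hxb : x = b
      exacts [Or.inr hxb, Or.inl (hM x hx hxb)]
    · refine ⟨Set.injOn_singleton f b, ?_⟩
      rintro S hS x hx y hy w rfl rfl hyW h1 h2
      exact hx
    · rintro S hS r hr y hy hrM rfl hyM w hw hlt
      by_contra hwS
      have hSN : S ⊆ N := by
        rcases h.inside S hS with h' | h' | h'
        exacts [absurd (h' ▸ hMW hw) hwS, absurd (h' hy) hyM, h']
      have hra : r ≠ a := fun h => haN (h ▸ hSN hr)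
      have hwa : w ≠ a := by
        rintro rfl
        exact absurd hlt (not_lt.mpr (hmin r hrM hra).le)
      have hrP := hPall r hrM (hSN hr)
      have hwP := hPall w hw (hN w (hMW hw) hwa)
      -- In the remaining configuration `w = p`, so `r` lies strictly between `a` and `p`.
      have hwp : w = p := by
        by_contra hwp
        have o1 : Ovl A P := ⟨⟨p, hpA, hpP⟩, ⟨a, haA, fun h => haN (hPN h)⟩,
          ⟨w, hwP, fun h => (hA2 w h).elim hwa hwp⟩⟩
        have o2 : Ovl P S := ⟨⟨r, hrP, hr⟩, ⟨w, hwP, hwS⟩, ⟨y, hy, fun h => hyM (hPM h)⟩⟩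
        rcases hG.nest A hA P hP S hS o1 o2 with h' | h' | h'
        · exact haN (hSN (h' haA))
        · exact hbA (h' hy)
        · rcases h'.2 hwP with h' | h'
          · exact (hA2 w h').elim hwa hwp
          · exact hwS h'
      subst hwp
      have hrA := hf.2 A hA a haA w hpA r hrM ha hw (hmin r hrM hra) hlt
      rcases hA2 r hrA with h' | h'
      · exact hra h'
      · exact hwS (h' ▸ hr)
    · rintro S hS x hx y hy hxM rfl hyM w rfl hwM hlt
      exact hy

theorem Pair.orderable [Finite V] {W : Set V} {𝒞 : Set (Set V)} {M N : Set V} (hG : Good W 𝒞)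
    (ih : ∀ W', W' ⊂ W → Orderable 𝒞 W') (h : Pair W 𝒞 M N) : Orderable 𝒞 W := by
  -- If `M` has three points and its complement two, then `W` splits along `M`; the other
  -- possibilities are `M = {a, p}` and `W \ M = {b}`.
  have main : ∀ M N, Pair W 𝒞 M N → Orderable 𝒞 W ∨ ∃ b, b ∈ N ∧ b ∉ M ∧ ∀ x ∈ W, x ≠ b → x ∈ M := by
    intro M N h
    obtain ⟨a, ha, haN⟩ := h.ovl.2.1
    obtain ⟨b, hb, hbM⟩ := h.ovl.2.2
    have hcov : ∀ x ∈ W, x ∉ M → x ∈ N := fun x hx hxM => (h.cover hx).resolve_left hxM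
    by_cases hsm : ∃ p ∈ M, p ∈ N ∧ ∀ x ∈ M, x = a ∨ x = p
    · obtain ⟨p, hp, hpN, hall⟩ := hsm
      exact Or.inl (h.orderable_of_two hG ih ha haN hp hpN hall)
    · by_cases hone : ∃ q, ∀ y ∈ W, y ∉ M → y = q
      · obtain ⟨q, hq⟩ := hone
        have hbq := hq b (hG.sub N h.right hb) hbM
        refine Or.inr ⟨b, hb, hbM, fun x hx hxb => ?_⟩
        by_contra hxM
        exact hxb ((hq x hx hxM).trans hbq.symm)
      · push Not at hone hsm
        exact Or.inl (hG.split_of_cover ih h.left h.right h.ovl.symm hcov (h.chain hG) hone ha haN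
          hsm)
  rcases main M N h with h' | ⟨b, hb, hbM, hM⟩
  · exact h'
  rcases main N M h.symm with h' | ⟨a, ha, haN, hN⟩
  · exact h'
  by_cases hA : ∃ A ∈ 𝒞, a ∈ A ∧ A ≠ W ∧ A ≠ M ∧ ∃ p ∈ A, p ≠ a
  · obtain ⟨A, hA, haA, hAW, hAM, p, hpA, hpa⟩ := hA
    exact h.orderable_of_mem hG ih ha haN hb hbM hN hM hA haA hAW hAM hpA hpa
  by_cases hB : ∃ B ∈ 𝒞, b ∈ B ∧ B ≠ W ∧ B ≠ N ∧ ∃ p ∈ B, p ≠ b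
  · obtain ⟨B, hB, hbB, hBW, hBN, p, hpB, hpb⟩ := hB
    exact h.symm.orderable_of_mem hG ih hb hbM ha haN hM hN hB hbB hBW hBN hpB hpb
  push Not at hA hB
  have hMW := hG.sub M h.left
  have hNW := hG.sub N h.right
  obtain ⟨p, hpM, hpN⟩ := h.ovl.1
  by_cases hone : ∀ x ∈ M, x ∈ N → x = p
  · refine h.orderable_of_two hG ih ha haN hpM hpN fun x hx => ?_
    by_cases hxa : x = a
    exacts [Or.inl hxa, Or.inr (hone x hx (hN x (hMW hx) hxa))]
  · -- Members through `a` or `b` are singletons or contain `M ∩ N`.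
    push Not at hone
    obtain ⟨r, hrM, hrN, hrp⟩ := hone
    refine Orderable.substitute ih (U := M ∩ N) ⟨fun x hx => hMW hx.1, fun h => haN (h (hMW ha)).2⟩
      (m := r) (n := p) ⟨hrM, hrN⟩ ⟨hpM, hpN⟩ hrp ?_
    rintro S hS ⟨⟨x, hxS, hxM, hxN⟩, ⟨y, hyS, hyU⟩, ⟨z, ⟨hzM, hzN⟩, hzS⟩⟩
    have hyW := hG.sub S hS hyS
    have hSW : S ≠ W := by
      rintro rfl
      exact hzS (hMW hzM)
    have hSM : S ≠ M := by
      rintro rfl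
      exact hzS hzM
    have hSN : S ≠ N := by
      rintro rfl
      exact hzS hzN
    by_cases hya : y = a
    · subst hya
      exact haN (hA S hS hyS hSW hSM x hxS ▸ hxN)
    · by_cases hyb : y = b
      · subst hyb
        exact hbM (hB S hS hyS hSW hSN x hxS ▸ hxM)
      · exact hyU ⟨hM y hyW hyb, hN y hyW hya⟩

/-! ### The induction -/

theorem Good.step [Finite V] {W : Set V} {𝒞 : Set (Set V)} (hG : Good W 𝒞)
    (ih : ∀ W', W' ⊂ W → Orderable 𝒞 W') : Orderable 𝒞 W := by
  by_cases htriv : ∃ S ∈ 𝒞, S ≠ W ∧ ∃ x ∈ S, ∃ y ∈ S, x ≠ y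
  swap
  · push Not at htriv
    obtain ⟨n, ⟨e⟩⟩ := Finite.exists_equiv_fin V
    refine ⟨fun x => ((e x : ℕ) : ℤ), ?_, ?_⟩
    · intro x _ y _ hxy
      simpa [Fin.val_inj] using hxy
    · intro S hS x hx y hy w hw _ _ h1 h2
      by_cases hSW : S = W
      · exact hSW ▸ hw
      · have := htriv S hS hSW x hx y hy
        subst this
        exact absurd (h1.trans h2) (lt_irrefl _)
  obtain ⟨S₀, hS₀, hS₀W, x, hx, y, hy, hxy⟩ := htriv
  -- `M`, `N`, `T` below are maximal among the members different from `W`.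
  have ext : ∀ S ∈ 𝒞, S ≠ W → ∃ M ∈ 𝒞, M ≠ W ∧ S ⊆ M ∧ ∀ T ∈ 𝒞, T ≠ W → M ⊆ T → T ⊆ M := by
    intro S hS hSW
    obtain ⟨M, hM, hSM, hmax⟩ := exists_maximal_mem (𝒟 := {S | S ∈ 𝒞 ∧ S ≠ W}) (S := S) ⟨hS, hSW⟩
    exact ⟨M, hM.1, hM.2, hSM, fun T hT hTW h => hmax T ⟨hT, hTW⟩ h⟩
  obtain ⟨M, hM, hMW, hSM, hMmax⟩ := ext S₀ hS₀ hS₀W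
  have hMsub := hG.sub M hM
  by_cases hMo : ∀ S ∈ 𝒞, ¬ Ovl S M
  · exact Orderable.substitute ih (hMsub.ssubset_of_ne hMW) (hSM hx) (hSM hy) hxy hMo
  push Not at hMo
  obtain ⟨N₀, hN₀, hN₀M⟩ := hMo
  -- A maximal member overlaps any member other than `W` that meets it and is not inside it.
  have ovl : ∀ A ∈ 𝒞, A ≠ W → (∀ T ∈ 𝒞, T ≠ W → A ⊆ T → T ⊆ A) → ∀ B ∈ 𝒞, B ≠ W →
      ∀ u ∈ A, u ∈ B → ¬ B ⊆ A → Ovl A B := by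
    intro A hA hAW hAmax B hB hBW u huA huB hBA
    refine ⟨⟨u, huA, huB⟩, ?_, Set.not_subset.mp hBA⟩
    exact Set.not_subset.mp fun h => hBA (hAmax B hB hBW h)
  obtain ⟨N, hN, hNW, hN₀N, hNmax⟩ := ext N₀ hN₀ (by
    rintro rfl
    obtain ⟨z, hz, hz'⟩ := hN₀M.2.2
    exact hz' (hMsub hz))
  have hMN : Ovl M N := by
    obtain ⟨u, hu, hu'⟩ := hN₀M.1
    obtain ⟨v, hv, hv'⟩ := hN₀M.2.1
    exact ovl M hM hMW hMmax N hN hNW u hu' (hN₀N hu) fun h => hv' (h (hN₀N hv))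
  have hNsub := hG.sub N hN
  have three : ∀ M ∈ 𝒞, ∀ N ∈ 𝒞, ∀ T ∈ 𝒞, M ≠ W → (∀ T ∈ 𝒞, T ≠ W → M ⊆ T → T ⊆ M) →
      ¬ M ⊆ T → ¬ T ⊆ M → Ovl M N → Ovl N T → Orderable 𝒞 W := by
    intro M hM N hN T hT hMW hMmax hMT hTM hMN hNT
    rcases hG.nest M hM N hN T hT hMN hNT with h | h | ⟨h, h'⟩
    · exact absurd h hMT
    · exact absurd h hTM
    · refine hG.orderable_three ih hM hN hT hMN hNT h ?_
      have hU : M ∪ N ∪ T = W := by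
        by_contra hne
        obtain ⟨z, hz, hzM⟩ := hMN.2.2
        exact hzM (hMmax _ (hG.union M hM N hN T hT hMN hNT h) hne
          (fun x hx => Or.inl (Or.inl hx)) (Or.inl (Or.inr hz)))
      rw [← hU]
      rintro x ((hx | hx) | hx)
      exacts [Or.inl hx, h' hx, Or.inr hx]
  by_cases hT₀ : ∃ T ∈ 𝒞, T ≠ W ∧ ¬ T ⊆ M ∧ ¬ T ⊆ N ∧ ∃ u ∈ T, u ∈ M ∪ N
  · obtain ⟨T₀, hT₀, hT₀W, hT₀M, hT₀N, u, huT, hu⟩ := hT₀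
    obtain ⟨T, hT, hTW, hT₀T, hTmax⟩ := ext T₀ hT₀ hT₀W
    have hTM : ¬ T ⊆ M := fun h => hT₀M (hT₀T.trans h)
    have hTN : ¬ T ⊆ N := fun h => hT₀N (hT₀T.trans h)
    have hMT : ¬ M ⊆ T := fun h => hTM (hMmax T hT hTW h)
    have hNT : ¬ N ⊆ T := fun h => hTN (hNmax T hT hTW h)
    rcases hu with hu | hu
    · exact three N hN M hM T hT hNW hNmax hNT hTN hMN.symm
        (ovl M hM hMW hMmax T hT hTW u hu (hT₀T huT) hTM)
    · exact three M hM N hN T hT hMW hMmax hMT hTM hMN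
        (ovl N hN hNW hNmax T hT hTW u hu (hT₀T huT) hTN)
  push Not at hT₀
  by_cases hcov : M ∪ N = W
  · refine Pair.orderable hG ih (M := M) (N := N) ⟨hM, hN, hMN, hcov.ge, fun S hS => ?_⟩
    by_contra hno
    push Not at hno
    obtain ⟨h1, h2, h3⟩ := hno
    obtain ⟨z, hz, -⟩ := Set.not_subset.mp h2
    exact hT₀ S hS h1 h2 h3 z hz (hcov ▸ hG.sub S hS hz)
  · refine Orderable.substitute ih (U := M ∪ N) ((Set.union_subset hMsub hNsub).ssubset_of_ne hcov)
      (Or.inl (hSM hx)) (Or.inl (hSM hy)) hxy ?_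
    rintro S hS ⟨⟨u, huS, hu⟩, ⟨v, hvS, hv⟩, ⟨w, hw, hwS⟩⟩
    refine hT₀ S hS ?_ (fun h => hv (Or.inl (h hvS))) (fun h => hv (Or.inr (h hvS))) u huS hu
    rintro rfl
    exact hwS (Set.union_subset hMsub hNsub hw)

theorem Good.orderable [Finite V] (W : Set V) : ∀ 𝒞, Good W 𝒞 → Orderable 𝒞 W := by
  induction W using WellFoundedLT.induction with
  | _ W ih =>
    intro 𝒞 hG
    exact hG.step fun W' hW' => (ih W' hW' _ (hG.restrict hW'.subset)).of_restrict


/-- A monotone transit function satisfying (l1) and (l2) is pyramidal. -/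
theorem stmt_1 {V : Type*} [Fintype V] [Nonempty V] (R : V → V → Set V)
    (htf : IsTransit R) (hm : IsMonotone R)
    (hl1 : AxL1 R) (hl2 : AxL2 R) :
    IsPyramidal R := by
  obtain ⟨f, hf, hi⟩ := Good.orderable Set.univ _ (good_transitSets R htf hm hl1 hl2)
  refine ⟨hm, fun x y => f x < f y, ?_, ?_⟩
  · exact { irrefl := fun x => lt_irrefl (f x)
            trans := fun x y z => lt_trans
            trichotomous := fun x y h1 h2 =>
              hf trivial trivial (le_antisymm (not_lt.mp h2) (not_lt.mp h1)) }
  · intro u v x hx y hy w h1 h2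
    exact hi (R u v) ⟨u, v, rfl⟩ x hx y hy w trivial trivial trivial h1 h2

end TransitPaper
end

section
/- Let R be a monotone transit function on a finite nonempty set V. Then the following are equivalent: (i) R satisfies (tb); (ii) R satisfies (hc); (iii) R satisfies (tb'); (iv) the system of transit sets 𝒞_R is totally balanced (contains no weak β-cycle). -/
/-!
The equivalence of (tb') with total balancedness is immediate from monotonicity: in a weak β-cycle
the set `C (i + 1)` may be replaced by the smaller transit set `R (x i) (x (i + 1))`. A cycle
violating (tb') gives a set `W` (its vertices) violating (tb), since at each vertex of it the two
neighbours are incomparable, and (hc) trivially implies (tb).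

The substance is (tb') ⇒ (hc). Call `x ∈ W` *simple in `W`* if the traces of the sets `R x u`,
`u ∈ W`, form a chain, that is, `u ∈ R x v` or `v ∈ R x u` for all `u, v ∈ W`. As in Dirac's theorem
on simplicial vertices of chordal graphs, one proves more (`exists_simple`): if `E` is a proper
subset of `W` that is convex in `W`, then some simple vertex of `W` lies outside `E`. Using this
with `E = ∅` and then with `E = {x}` yields two distinct simple vertices.

The proof is by induction on `|W|`. Enlarge `E` to a maximal proper convex subset, and call `u, v`
adjacent if `R u v` does not contain `W`. Cycles of length three being excluded, every nonempty `Z`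
is contained in `R x y` for some `x, y ∈ Z` (`exists_pair_cover`); for `Z = E ∪ {b}` this shows that
each `b ∈ W \ E` has a non-neighbour in `E`. Let `b` have a maximal set `S` of neighbours in `E`, and
let `B` be the component of `b` in the graph induced on `W \ E`. If some vertex of `B` had a neighbour
in `E` outside `S`, an induced path of `B` together with two vertices of `E` would form a forbidden
cycle (`nbr_subset_of_reachable`). Hence `B ∪ S` is a proper subset of `W`, and the induction
hypothesis gives a vertex of `B` that is simple in `B ∪ S`. Since `R x z ⊇ W` for `x ∈ B` and
`z ∈ W \ (B ∪ S)`, it is simple in `W` as well.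
-/

namespace TransitPaper

variable {V : Type*}

/-! ### Cycles indexed by an initial segment of `ℕ` -/

lemma one_ne_zero_zmod {n : ℕ} (hn : 3 ≤ n) : (1 : ZMod n) ≠ 0 := by
  have : Fact (1 < n) := ⟨by omega⟩
  exact one_ne_zero

lemma two_ne_zero_zmod {n : ℕ} (hn : 3 ≤ n) : (2 : ZMod n) ≠ 0 := by
  intro h
  have hdvd : ((2 : ℕ) : ZMod n) = 0 := by exact_mod_cast h
  rw [ZMod.natCast_eq_zero_iff] at hdvd
  have := Nat.le_of_dvd (by norm_num) hdvd
  omega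

/-- In (tb'), the local premise already follows from the negation of the conclusion. -/
lemma AxTB'.exists_mem {R : V → V → Set V} (h : AxTB' R) {n : ℕ} (hn : 3 ≤ n) (v : ZMod n → V) :
    ∃ j i : ZMod n, i ≠ j ∧ i ≠ j - 1 ∧ v j ∈ R (v i) (v (i + 1)) := by
  by_contra hc
  push Not at hc
  have h1 := one_ne_zero_zmod hn
  have h2 := two_ne_zero_zmod hn
  refine absurd (h n hn v fun k => ⟨?_, ?_⟩) (by push Not; exact hc)
  · refine hc (k - 1) k (fun e => h1 ?_) (fun e => h2 ?_)
    · linear_combination e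
    · linear_combination e
  · have := hc (k + 1) (k - 1) (fun e => h2 ?_) (fun e => h1 ?_)
    · simpa using this
    · linear_combination -e
    · linear_combination -e

/-- A vertex sequence `v 0, …, v (n - 1)` cannot form a cycle forbidden by (tb'). -/
lemma AxTB'.no_cycle {R : V → V → Set V} (htf : IsTransit R) (h : AxTB' R) {n : ℕ} (hn : 3 ≤ n)
    (v : ℕ → V)
    (hpath : ∀ i j, i + 1 < n → j < n → j ≠ i → j ≠ i + 1 → v j ∉ R (v i) (v (i + 1)))
    (hclose : ∀ j, 0 < j → j + 1 < n → v j ∉ R (v 0) (v (n - 1))) : False := by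
  have : NeZero n := ⟨by omega⟩
  obtain ⟨j, i, hij, hij', hmem⟩ := h.exists_mem hn (fun k => v k.val)
  have hj := j.val_lt
  have hi := i.val_lt
  have hne : j.val ≠ i.val := fun e => hij (ZMod.val_injective n e).symm
  have hne' : j ≠ i + 1 := fun e => hij' (by rw [e]; ring)
  by_cases hlast : i.val + 1 = n
  · have h0 : i + 1 = 0 := by
      have : ((i.val + 1 : ℕ) : ZMod n) = 0 := by rw [hlast]; simp
      simpa using this
    rw [h0] at hne'
    have hj0 : j.val ≠ 0 := fun e => hne' ((ZMod.val_eq_zero j).1 e)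
    refine hclose j.val (by omega) (by omega) ?_
    have e : i.val = n - 1 := by omega
    rw [htf.2.1, ← e]
    simpa [h0] using hmem
  · have hs : (i + 1).val = i.val + 1 := by
      have h1 : (1 : ZMod n).val = 1 := ZMod.val_one'' (by omega)
      rw [ZMod.val_add_of_lt (by omega), h1]
    refine hpath i.val j.val (by omega) hj hne (fun e => hne' ?_) ?_
    · exact ZMod.val_injective n (by rw [hs, e])
    · rw [← hs]; exact hmem

lemma AxTB'.triangle {R : V → V → Set V} (htf : IsTransit R) (h : AxTB' R) (x y z : V) :
    z ∈ R x y ∨ x ∈ R y z ∨ y ∈ R x z := by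
  by_contra hc
  push Not at hc
  obtain ⟨h1, h2, h3⟩ := hc
  let v : ℕ → V := fun m => if m = 0 then x else if m = 1 then y else z
  refine h.no_cycle htf (n := 3) le_rfl v (fun i j hi hj hji hji' => ?_) (fun j hj hj' => ?_)
  · obtain rfl | rfl : i = 0 ∨ i = 1 := by omega
    · obtain rfl : j = 2 := by omega
      simpa [v] using h1
    · obtain rfl : j = 0 := by omega
      simpa [v] using h2
  · obtain rfl : j = 1 := by omega
    simpa [v] using h3

/-- Conformality: a pair `x, y ∈ Z` with `R x y ∩ Z` of maximal size covers all of `Z`. -/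
lemma exists_pair_cover {R : V → V → Set V} (htf : IsTransit R) (hm : IsMonotone R)
    (h : AxTB' R) (Z : Finset V) (hZ : Z.Nonempty) :
    ∃ x ∈ Z, ∃ y ∈ Z, (Z : Set V) ⊆ R x y := by
  classical
  obtain ⟨⟨x, y⟩, hxy, hmax⟩ := (Z ×ˢ Z).exists_max_image
    (fun p => (Z.filter (fun z => z ∈ R p.1 p.2)).card) (hZ.product hZ)
  rw [Finset.mem_product] at hxy
  refine ⟨x, hxy.1, y, hxy.2, fun w hw => ?_⟩
  have hw' : w ∈ Z := hw
  by_contra hwn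
  -- a transit set containing `R x y` and `w` contradicts maximality
  have key : ∀ p ∈ Z, ∀ q ∈ Z, R x y ⊆ R p q → w ∈ R p q → False := by
    intro p hp q hq hsub hwpq
    have hlt : (Z.filter (fun z => z ∈ R x y)).card < (Z.filter (fun z => z ∈ R p q)).card := by
      refine Finset.card_lt_card (Finset.ssubset_iff_of_subset ?_ |>.2 ⟨w, ?_, ?_⟩)
      · intro z hz
        rw [Finset.mem_filter] at hz ⊢
        exact ⟨hz.1, hsub hz.2⟩
      · exact Finset.mem_filter.2 ⟨hw', hwpq⟩
      · exact fun hh => hwn (Finset.mem_filter.1 hh).2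
    exact absurd (hmax (p, q) (Finset.mem_product.2 ⟨hp, hq⟩)) (not_le.2 hlt)
  have hr : ∀ a b : V, b ∈ R a b := fun a b => htf.2.1 a b ▸ htf.1 b a
  rcases h.triangle htf x y w with h1 | h1 | h1
  · exact hwn h1
  · exact key y hxy.2 w hw' (hm _ _ _ _ h1 (htf.1 _ _)) (hr _ _)
  · exact key x hxy.1 w hw' (hm _ _ _ _ (htf.1 _ _) h1) (hr _ _)

/-! ### The non-covering graph -/

/-- The graph of pairs whose transit set does not cover `W`, restricted to `W \ E`. -/
def Nbr (R : V → V → Set V) (W E : Finset V) (u v : V) : Prop :=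
  (u ∈ W ∧ u ∉ E) ∧ (v ∈ W ∧ v ∉ E) ∧ ¬ (W : Set V) ⊆ R u v

/-- The vertex `x` is simple in `W`; for monotone `R` this says that the sets `R x u`, `u ∈ W`, are
linearly ordered by inclusion. -/
def SimpleIn (R : V → V → Set V) (W : Finset V) (x : V) : Prop :=
  ∀ u ∈ W, ∀ v ∈ W, u ∈ R x v ∨ v ∈ R x u

/-- The subset `E` of `W` is convex in `W`. -/
def ConvexIn (R : V → V → Set V) (W E : Finset V) : Prop :=
  ∀ p ∈ E, ∀ q ∈ E, ∀ z ∈ W, z ∈ R p q → z ∈ E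

/-- A cycle of length at least four whose chords all cover `W` is forbidden. The pair
`v 0, v (n - 1)` need not be adjacent, provided its transit set avoids the rest of the cycle. -/
lemma AxTB'.no_chordless {R : V → V → Set V} (htf : IsTransit R) (hm : IsMonotone R) (h : AxTB' R)
    (W : Finset V) {n : ℕ} (hn : 4 ≤ n) (v : ℕ → V)
    (hadj : ∀ i, i + 1 < n → ¬ (W : Set V) ⊆ R (v i) (v (i + 1)))
    (hchord : ∀ i j, i + 2 ≤ j → j < n → ¬ (i = 0 ∧ j + 1 = n) → (W : Set V) ⊆ R (v i) (v j))
    (hclose : ∀ j, 0 < j → j + 1 < n → v j ∉ R (v 0) (v (n - 1))) : False := by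
  have hr : ∀ a b : V, b ∈ R a b := fun a b => htf.2.1 a b ▸ htf.1 b a
  refine h.no_cycle htf (by omega) v (fun i j hi hj hji hji' hmem => hadj i hi ?_) hclose
  -- `R (v i) (v j)` and `R (v j) (v (i + 1))` lie in `R (v i) (v (i + 1))`; one of them is a chord
  have h1 : R (v i) (v j) ⊆ R (v i) (v (i + 1)) := hm _ _ _ _ (htf.1 _ _) hmem
  have h2 : R (v j) (v (i + 1)) ⊆ R (v i) (v (i + 1)) := hm _ _ _ _ hmem (hr _ _)
  rcases lt_or_gt_of_ne hji with hlt | hgt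
  · by_cases hc : j = 0 ∧ i + 2 = n
    · refine (hchord j i (by omega) (by omega) (by omega)).trans ?_
      rw [htf.2.1]; exact h1
    · exact (hchord j (i + 1) (by omega) (by omega) (by omega)).trans h2
  · by_cases hc : i = 0 ∧ j + 1 = n
    · refine (hchord (i + 1) j (by omega) (by omega) (by omega)).trans ?_
      rw [htf.2.1]; exact h2
    · exact (hchord i j (by omega) (by omega) (by omega)).trans h1

/-- Reachability is witnessed by an induced path. -/
lemma exists_induced_path {r : V → V → Prop} {a b : V} (hab : Relation.ReflTransGen r a b) :
    ∃ (k : ℕ) (p : ℕ → V), p 0 = a ∧ p k = b ∧ (∀ i < k, r (p i) (p (i + 1))) ∧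
      ∀ i j, i + 2 ≤ j → j ≤ k → ¬ r (p i) (p j) := by
  classical
  induction hab with
  | refl => exact ⟨0, fun _ => a, rfl, rfl, by intro i hi; omega, by intro i j h1 h2; omega⟩
  | @tail b c _ hbc ih =>
    obtain ⟨k, p, h0, hk, hp, hind⟩ := ih
    -- attach `c` to the first vertex of the path that is adjacent to it
    have hex : ∃ i, i ≤ k ∧ r (p i) c := ⟨k, le_rfl, hk ▸ hbc⟩
    let m := Nat.find hex
    obtain ⟨hmk, hmr⟩ : m ≤ k ∧ r (p m) c := Nat.find_spec hex
    have hmin : ∀ i < m, ¬ r (p i) c := fun i hi hr =>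
      Nat.find_min hex hi ⟨by omega, hr⟩
    refine ⟨m + 1, fun i => if i ≤ m then p i else c, by simp [h0], by simp, ?_, ?_⟩
    · intro i hi
      rcases Nat.lt_or_ge i m with hlt | hge
      · simpa [hlt.le, Nat.succ_le_of_lt hlt] using hp i (by omega)
      · obtain rfl : i = m := by omega
        simpa using hmr
    · intro i j hij hj
      have him : i ≤ m := by omega
      by_cases hjm : j ≤ m
      · simpa [him, hjm] using hind i j hij (by omega)
      · simpa [him, hjm] using hmin i (by omega)

/-- Let `b` have a set of neighbours in `E` that is maximal in cardinality. Then every vertex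
reachable from `b` outside `E` has all its neighbours in `E` among those of `b`. -/
lemma nbr_subset_of_reachable {R : V → V → Set V} (htf : IsTransit R) (hm : IsMonotone R)
    (h : AxTB' R) {W E : Finset V} (hE : ConvexIn R W E) (N : V → Finset V)
    (hN : ∀ b e, e ∈ N b ↔ e ∈ E ∧ ¬ (W : Set V) ⊆ R e b) {b c : V} (hb : b ∈ W ∧ b ∉ E)
    (hmax : ∀ c, c ∈ W ∧ c ∉ E → (N c).card ≤ (N b).card)
    (hbc : Relation.ReflTransGen (Nbr R W E) b c) : N c ⊆ N b := by
  classical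
  by_contra hcon
  obtain ⟨k, p, h0, hk, hp, hind⟩ := exists_induced_path hbc
  -- `p m` is the first vertex of the path with a neighbour `e ∈ E` outside `N b`
  have hex : ∃ i, i ≤ k ∧ ¬ N (p i) ⊆ N b := ⟨k, le_rfl, hk ▸ hcon⟩
  let m := Nat.find hex
  obtain ⟨hmk, hmN⟩ : m ≤ k ∧ ¬ N (p m) ⊆ N b := Nat.find_spec hex
  have hmin : ∀ i < m, N (p i) ⊆ N b := fun i hi => by
    by_contra hh
    exact Nat.find_min hex hi ⟨by omega, hh⟩
  have hpos : 0 < m := by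
    rcases Nat.eq_zero_or_pos m with e | e
    · rw [e, h0] at hmN; exact absurd (Finset.Subset.refl _) hmN
    · exact e
  have hpW : ∀ i ≤ k, p i ∈ W ∧ p i ∉ E := by
    intro i hi
    rcases Nat.eq_zero_or_pos i with e | e
    · rw [e, h0]; exact hb
    · obtain ⟨i', rfl⟩ : ∃ i', i = i' + 1 := ⟨i - 1, by omega⟩
      exact (hp i' (by omega)).2.1
  obtain ⟨e, hem, heb⟩ := Finset.not_subset.1 hmN
  obtain ⟨f, hfb, hfm⟩ : ∃ f ∈ N b, f ∉ N (p m) := by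
    by_contra hh
    push Not at hh
    have heq := Finset.eq_of_subset_of_card_le (s := N b) (t := N (p m)) (fun f hf => hh f hf)
      (hmax _ (hpW m hmk))
    exact heb (heq ▸ hem)
  -- `p i` is the last vertex before `p m` that is adjacent to `f`
  obtain ⟨i, hi⟩ : ∃ i, i = Nat.findGreatest (fun i => f ∈ N (p i)) m := ⟨_, rfl⟩
  have hif : f ∈ N (p i) := by
    rw [hi]
    exact Nat.findGreatest_spec (P := fun i => f ∈ N (p i)) (Nat.zero_le m) (by rw [h0]; exact hfb)
  have him : i ≤ m := hi ▸ Nat.findGreatest_le m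
  have hilt : i < m := lt_of_le_of_ne him (fun hh => hfm (hh ▸ hif))
  have hlast : ∀ j, i < j → j ≤ m → f ∉ N (p j) := fun j hj hjm =>
    Nat.findGreatest_is_greatest (P := fun i => f ∈ N (p i)) (hi ▸ hj) hjm
  have heE := ((hN _ _).1 hem).1
  have hfE := ((hN _ _).1 hfb).1
  have cov : ∀ g ∈ E, ∀ j, g ∉ N (p j) → (W : Set V) ⊆ R g (p j) := by
    intro g hg j hj
    by_contra hh
    exact hj ((hN _ _).2 ⟨hg, hh⟩)
  have heN : ∀ j < m, e ∉ N (p j) := fun j hj hh => heb (hmin j hj hh)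
  -- the forbidden cycle is `f, p i, …, p m, e`
  let v : ℕ → V := fun t => if t = 0 then f else if t = m - i + 2 then e else p (i + t - 1)
  have v0 : v 0 = f := rfl
  have vl : v (m - i + 2) = e := by simp [v]
  have vm : ∀ t, 0 < t → t < m - i + 2 → v t = p (i + t - 1) := by
    intro t h1 h2
    simp [v, h1.ne', h2.ne]
  refine h.no_chordless htf hm W (n := m - i + 3) (by omega) v ?_ ?_ ?_
  · intro t ht
    rcases Nat.eq_zero_or_pos t with rfl | hpos
    · rw [v0, vm (0 + 1) (by omega) (by omega)]
      exact ((hN _ _).1 hif).2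
    · by_cases htl : t + 1 = m - i + 2
      · rw [htl, vl, vm t hpos (by omega), htf.2.1]
        have : i + t - 1 = m := by omega
        rw [this]
        exact ((hN _ _).1 hem).2
      · rw [vm t hpos (by omega), vm (t + 1) (by omega) (by omega)]
        have := (hp (i + t - 1) (by omega)).2.2
        have e2 : i + t - 1 + 1 = i + (t + 1) - 1 := by omega
        rwa [e2] at this
  · intro s t hst ht hne
    rcases Nat.eq_zero_or_pos s with rfl | hpos
    · rw [v0, vm t (by omega) (by omega)]
      exact cov f hfE _ (hlast _ (by omega) (by omega))
    · by_cases htl : t = m - i + 2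
      · rw [htl, vl, vm s hpos (by omega), htf.2.1]
        exact cov e heE _ (heN _ (by omega))
      · rw [vm s hpos (by omega), vm t (by omega) (by omega)]
        by_contra hh
        exact hind (i + s - 1) (i + t - 1) (by omega) (by omega)
          ⟨hpW _ (by omega), hpW _ (by omega), hh⟩
  · intro t h1 h2 hmem
    have e3 : m - i + 3 - 1 = m - i + 2 := by omega
    rw [e3, v0, vl, vm t h1 (by omega)] at hmem
    have hw := hpW (i + t - 1) (by omega)
    exact hw.2 (hE f hfE e heE _ hw.1 hmem)

/-! ### Existence of simple vertices -/

lemma exists_simple {R : V → V → Set V} (htf : IsTransit R) (hm : IsMonotone R) (h : AxTB' R)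
    (W : Finset V) : ∀ E : Finset V, E ⊂ W → ConvexIn R W E → ∃ x ∈ W, x ∉ E ∧ SimpleIn R W x := by
  classical
  induction W using Finset.strongInduction with
  | H W ih =>
  intro E₀ hE₀ hE₀c
  -- enlarge `E₀` to a maximal proper convex subset `E`
  obtain ⟨E, hEmem, hEmax⟩ := (W.powerset.filter
    (fun E => E₀ ⊆ E ∧ E ⊂ W ∧ ConvexIn R W E)).exists_max_image Finset.card
    ⟨E₀, by simp [hE₀, hE₀.1, hE₀c]⟩
  obtain ⟨-, hE₀E, hEW, hEc⟩ := Finset.mem_filter.1 hEmem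
  suffices hs : ∃ x ∈ W, x ∉ E ∧ SimpleIn R W x by
    obtain ⟨x, hx, hxE, hxs⟩ := hs
    exact ⟨x, hx, fun hh => hxE (hE₀E hh), hxs⟩
  obtain ⟨b₀, hb₀W, hb₀E⟩ := Finset.exists_of_ssubset hEW
  -- transit sets containing `E` and a further vertex of `W` cover `W`
  have hfull : ∀ b ∈ W, b ∉ E → ∀ x y, ((insert b E : Finset V) : Set V) ⊆ R x y →
      (W : Set V) ⊆ R x y := by
    intro b hb hbE x y hsub
    by_contra hh
    obtain ⟨w, hw, hwn⟩ := Set.not_subset.1 hh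
    have hmem : W.filter (fun z => z ∈ R x y) ∈
        W.powerset.filter (fun E => E₀ ⊆ E ∧ E ⊂ W ∧ ConvexIn R W E) := by
      refine Finset.mem_filter.2 ⟨by simp, ?_, ?_, ?_⟩
      · intro z hz
        exact Finset.mem_filter.2 ⟨hE₀.1 hz, hsub (by simp [hE₀E hz])⟩
      · refine Finset.ssubset_iff_of_subset (Finset.filter_subset _ _) |>.2 ⟨w, hw, ?_⟩
        exact fun hh' => hwn (Finset.mem_filter.1 hh').2
      · intro p hp q hq z hz hzpq
        exact Finset.mem_filter.2 ⟨hz, hm _ _ _ _ (Finset.mem_filter.1 hp).2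
          (Finset.mem_filter.1 hq).2 hzpq⟩
    have hle := hEmax _ hmem
    have hss : insert b E ⊆ W.filter (fun z => z ∈ R x y) := by
      intro z hz
      refine Finset.mem_filter.2 ⟨?_, hsub hz⟩
      rcases Finset.mem_insert.1 hz with rfl | hz
      · exact hb
      · exact hEW.1 hz
    have := Finset.card_le_card hss
    rw [Finset.card_insert_of_notMem hbE] at this
    omega
  by_cases hE0 : E = ∅
  · -- then `W` is a singleton
    have hW : (W : Set V) ⊆ {b₀} := by
      have := hfull b₀ hb₀W hb₀E b₀ b₀ (by simp [hE0, htf.2.2])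
      rwa [htf.2.2] at this
    refine ⟨b₀, hb₀W, hb₀E, fun u hu v hv => Or.inl ?_⟩
    rw [show u = b₀ from hW hu]
    exact htf.1 _ _
  have hnon : ∀ b ∈ W, b ∉ E → ∃ e ∈ E, (W : Set V) ⊆ R e b := by
    intro b hb hbE
    obtain ⟨x, hx, y, hy, hxy⟩ := exists_pair_cover htf hm h (insert b E) (by simp)
    have hcov := hfull b hb hbE x y hxy
    rcases Finset.mem_insert.1 hx with rfl | hx' <;> rcases Finset.mem_insert.1 hy with rfl | hy'
    · obtain ⟨e, he⟩ := Finset.nonempty_iff_ne_empty.2 hE0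
      have : e ∈ R y y := hxy (by simp [he])
      rw [htf.2.2] at this
      exact absurd (this ▸ he) hbE
    · exact ⟨y, hy', by rw [htf.2.1]; exact hcov⟩
    · exact ⟨x, hx', hcov⟩
    · exact absurd (hEc x hx' y hy' b hb (hcov hb)) hbE
  let N : V → Finset V := fun b => E.filter (fun e => ¬ (W : Set V) ⊆ R e b)
  have hN : ∀ b e, e ∈ N b ↔ e ∈ E ∧ ¬ (W : Set V) ⊆ R e b := fun b e => Finset.mem_filter
  obtain ⟨b, hbmem, hbmax⟩ := (W \ E).exists_max_image (fun b => (N b).card)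
    ⟨b₀, Finset.mem_sdiff.2 ⟨hb₀W, hb₀E⟩⟩
  have hb := Finset.mem_sdiff.1 hbmem
  have hreach : ∀ c, Relation.ReflTransGen (Nbr R W E) b c → N c ⊆ N b := fun c hc =>
    nbr_subset_of_reachable htf hm h hEc N hN hb
      (fun c hc => hbmax c (Finset.mem_sdiff.2 hc)) hc
  let B : Finset V := (W \ E).filter (fun c => Relation.ReflTransGen (Nbr R W E) b c)
  have hBdef : ∀ c, c ∈ B ↔ (c ∈ W ∧ c ∉ E) ∧ Relation.ReflTransGen (Nbr R W E) b c := by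
    intro c; simp [B]
  have hNE : ∀ c, N c ⊆ E := fun c => Finset.filter_subset _ _
  have hsub : B ∪ N b ⊆ W := by
    intro z hz
    rcases Finset.mem_union.1 hz with hz | hz
    · exact ((hBdef z).1 hz).1.1
    · exact hEW.1 (hNE b hz)
  have hss : B ∪ N b ⊂ W := by
    obtain ⟨e, he, hcov⟩ := hnon b hb.1 hb.2
    refine Finset.ssubset_iff_of_subset hsub |>.2 ⟨e, hEW.1 he, fun hh => ?_⟩
    rcases Finset.mem_union.1 hh with hh | hh
    · exact ((hBdef e).1 hh).1.2 he
    · exact ((hN b e).1 hh).2 hcov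
  obtain ⟨x, hx, hxN, hxs⟩ := ih (B ∪ N b) hss (N b) (by
      refine Finset.ssubset_iff_of_subset Finset.subset_union_right |>.2 ⟨b, ?_, ?_⟩
      · exact Finset.mem_union_left _ ((hBdef b).2 ⟨hb, .refl⟩)
      · exact fun hh => hb.2 (hNE b hh)) (by
      intro p hp q hq z hz hzpq
      rcases Finset.mem_union.1 hz with hz' | hz'
      · exact absurd (hEc p (hNE b hp) q (hNE b hq) z (hsub hz) hzpq) ((hBdef z).1 hz').1.2
      · exact hz')
  have hxB : x ∈ B := (Finset.mem_union.1 hx).resolve_right hxN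
  obtain ⟨hxW, hxr⟩ := (hBdef x).1 hxB
  -- pairs joining `x` to the outside of `B ∪ N b` cover `W`
  have hout : ∀ z ∈ W, z ∉ B ∪ N b → (W : Set V) ⊆ R x z := by
    intro z hz hzn
    rw [Finset.mem_union, not_or] at hzn
    by_contra hh
    by_cases hzE : z ∈ E
    · exact hzn.2 (hreach x hxr ((hN x z).2 ⟨hzE, by rwa [htf.2.1]⟩))
    · exact hzn.1 ((hBdef z).2 ⟨⟨hz, hzE⟩, hxr.tail ⟨hxW, ⟨hz, hzE⟩, hh⟩⟩)
  refine ⟨x, hxW.1, hxW.2, fun u hu v hv => ?_⟩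
  by_cases huB : u ∈ B ∪ N b
  · by_cases hvB : v ∈ B ∪ N b
    · exact hxs u huB v hvB
    · exact Or.inl (hout v hv hvB hu)
  · exact Or.inr (hout u hu huB hv)

lemma AxTB'.axHC {R : V → V → Set V} (htf : IsTransit R) (hm : IsMonotone R) (h : AxTB' R) :
    AxHC R := by
  classical
  intro W hW
  obtain ⟨x, hx, -, hxs⟩ := exists_simple htf hm h W ∅
    (Finset.empty_ssubset.2 (Finset.card_pos.1 (by omega))) (by intro p hp; simp at hp)
  obtain ⟨y, hy, hyx, hys⟩ := exists_simple htf hm h W {x} (by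
      refine Finset.ssubset_iff_subset_ne.2 ⟨by simpa using hx, fun e => ?_⟩
      rw [← e] at hW
      simp at hW) (by
      intro p hp q hq z _ hz
      rw [Finset.mem_singleton] at hp hq ⊢
      subst hp hq
      rw [htf.2.2] at hz
      exact hz)
  have chain : ∀ a, SimpleIn R W a → ∀ u ∈ W, ∀ v ∈ W, R a u ⊆ R a v ∨ R a v ⊆ R a u := by
    intro a ha u hu v hv
    rcases ha u hu v hv with h1 | h1
    · exact Or.inl (hm _ _ _ _ (htf.1 _ _) h1)
    · exact Or.inr (hm _ _ _ _ (htf.1 _ _) h1)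
  refine ⟨x, hx, y, hy, fun e => hyx (by simp [e]), fun u hu v hv => ?_⟩
  exact ⟨chain x hxs u hu v hv, chain y hys u hu v hv⟩

/-! ### The remaining implications -/

lemma AxTB.axTB' {R : V → V → Set V} (htf : IsTransit R) (h : AxTB R) : AxTB' R := by
  classical
  intro n hn v hv
  exfalso
  have : NeZero n := ⟨by omega⟩
  have hr : ∀ a b : V, b ∈ R a b := fun a b => htf.2.1 a b ▸ htf.1 b a
  have hcard : 3 ≤ (Finset.univ.image v).card := by
    have h01 : v 0 ≠ v 1 := by
      intro e
      have := (hv 1).1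
      rw [sub_self, e] at this
      exact this (htf.1 _ _)
    have h02 : v 0 ≠ v 2 := by
      intro e
      have := (hv 1).1
      rw [sub_self, e, one_add_one_eq_two] at this
      exact this (hr _ _)
    have h12 : v 1 ≠ v 2 := by
      intro e
      have := (hv 1).2
      rw [one_add_one_eq_two, ← e] at this
      exact this (hr _ _)
    calc 3 = ({v 0, v 1, v 2} : Finset V).card := by
            rw [Finset.card_eq_three.2 ⟨_, _, _, h01, h02, h12, rfl⟩]
      _ ≤ _ := Finset.card_le_card (by
            intro z hz
            simp only [Finset.mem_insert, Finset.mem_singleton] at hz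
            rcases hz with rfl | rfl | rfl <;> simp)
  obtain ⟨x, hx, hchain⟩ := h _ hcard
  obtain ⟨k, -, rfl⟩ := Finset.mem_image.1 hx
  rcases hchain (v (k - 1)) (by simp) (v (k + 1)) (by simp) with h1 | h1
  · exact (hv k).1 (h1 (hr _ _))
  · exact (hv k).2 (by rw [htf.2.1]; exact h1 (hr _ _))

lemma axTB'_iff_totallyBalanced {R : V → V → Set V} (htf : IsTransit R) (hm : IsMonotone R) :
    AxTB' R ↔ TotallyBalanced (transitSets R) := by
  have hr : ∀ a b : V, b ∈ R a b := fun a b => htf.2.1 a b ▸ htf.1 b a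
  constructor
  · rintro h ⟨n, hn, C, x, hC, hx, hxn⟩
    obtain ⟨j, i, hij, hij', hmem⟩ := h.exists_mem hn x
    refine hxn j (i + 1) (fun e => hij' ?_) (fun e => hij (add_right_cancel e)) ?_
    · linear_combination e
    · obtain ⟨p, q, hpq⟩ := hC (i + 1)
      have h1 := (hx i).2
      have h2 := (hx (i + 1)).1
      rw [hpq] at h1 h2 ⊢
      exact hm _ _ _ _ h1 h2 hmem
  · intro h n hn v _
    by_contra hc
    push Not at hc
    refine h ⟨n, hn, fun i => R (v (i - 1)) (v i), v, fun i => ⟨_, _, rfl⟩,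
      fun i => ⟨hr _ _, ?_⟩, fun i k hk hk' hmem => ?_⟩
    · simpa using htf.1 (v i) (v (i + 1))
    · refine hc i (k - 1) (fun e => hk' ?_) (fun e => hk ?_) ?_
      · linear_combination e
      · linear_combination e
      · simpa using hmem

/-- For a monotone transit function, (tb), (hc), (tb') and total
balancedness of the transit sets are equivalent. -/
theorem stmt_3 {V : Type*} [Fintype V] [Nonempty V] (R : V → V → Set V)
    (htf : IsTransit R) (hm : IsMonotone R) :
    [AxTB R, AxHC R, AxTB' R, TotallyBalanced (transitSets R)].TFAE := by
  tfae_have 1 → 3 := AxTB.axTB' htf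
  tfae_have 3 → 2 := AxTB'.axHC htf hm
  tfae_have 2 → 1 := by
    intro h W hW
    obtain ⟨x, hx, _, _, _, hxy⟩ := h W hW
    exact ⟨x, hx, fun u hu v hv => (hxy u hu v hv).1⟩
  tfae_have 3 ↔ 4 := axTB'_iff_totallyBalanced htf hm
  tfae_finish

end TransitPaper
end

section
/- Every pyramidal transit function R on a finite nonempty set V satisfies axiom (hc). -/
/-!
For a pyramidal transit function, the least and the greatest element of `W` with respect to a
compatible order witness (hc). If `x` is least in `W` and `u < v` lie in `W`, then `u` lies between
`x` and `v`, hence in the interval `R x v`, and monotonicity gives `R x u ⊆ R x v`; so the sets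
`R x w` with `w ∈ W` form a chain (`chain_of_least`). The greatest element is handled by reversing
the order.
-/

namespace TransitPaper

variable {V : Type*}

/-- If every transit set is an interval for a strict total order `lt` and `x` is `lt`-least in `W`,
then the sets `R x w`, `w ∈ W`, form a chain. The order is a parameter so that the lemma also
applies to the reversed order, i.e. to the greatest element of `W`. -/
theorem chain_of_least {V : Type*} {R : V → V → Set V} (htf : IsTransit R) (hm : IsMonotone R)
    {lt : V → V → Prop} (htri : ∀ a b, lt a b ∨ a = b ∨ lt b a)
    (hint : ∀ u v, IsIntervalWrt lt (R u v)) {W : Finset V} {x : V}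
    (hx : ∀ w ∈ W, w = x ∨ lt x w) :
    ∀ u ∈ W, ∀ v ∈ W, R x u ⊆ R x v ∨ R x v ⊆ R x u := by
  obtain ⟨h1, h2, -⟩ := htf
  have right_mem : ∀ a b, b ∈ R a b := fun a b => h2 b a ▸ h1 b a
  -- `x ≤ u < v` places `u` in the interval `R x v`, and monotonicity does the rest.
  have key : ∀ u ∈ W, ∀ v, lt u v → R x u ⊆ R x v := by
    intro u hu v huv
    refine hm x v x u (h1 x v) ?_
    rcases hx u hu with rfl | hxu
    · exact h1 _ _
    · exact hint x v x (h1 x v) v (right_mem x v) u hxu huv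
  intro u hu v hv
  rcases htri u v with h | rfl | h
  · exact Or.inl (key u hu v h)
  · exact Or.inl subset_rfl
  · exact Or.inr (key v hv u h)

/-- Every pyramidal transit function satisfies (hc). -/
theorem stmt_4 {V : Type*} [Fintype V] [Nonempty V] (R : V → V → Set V)
    (htf : IsTransit R) (hpy : IsPyramidal R) :
    AxHC R := by
  obtain ⟨hm, lt, hlt, hint⟩ := hpy
  intro W hW
  classical
  letI : LinearOrder V := linearOrderOfSTO lt
  have hne : W.Nonempty := Finset.card_pos.mp (by omega)
  have hint_rev : ∀ u v, IsIntervalWrt (fun a b => lt b a) (R u v) :=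
    fun u v a ha b hb w haw hwb => hint u v b hb a ha w hwb haw
  have hmin := chain_of_least (W := W) (x := W.min' hne) htf hm
    (fun a b => lt_trichotomy a b) hint
    (fun w hw => (W.min'_le w hw).eq_or_lt.imp_left Eq.symm)
  have hmax := chain_of_least (W := W) (x := W.max' hne) htf hm
    (fun a b => (lt_trichotomy b a).imp_right (Or.imp_left Eq.symm)) hint_rev
    (fun w hw => (W.le_max' w hw).eq_or_lt)
  exact ⟨W.min' hne, W.min'_mem hne, W.max' hne, W.max'_mem hne,
    (W.min'_lt_max'_of_card (by omega)).ne,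
    fun u hu v hv => ⟨hmin u hu v hv, hmax u hu v hv⟩⟩

end TransitPaper
end

section
/- Let R be a monotone pyramidal transit function on a finite nonempty set V, with total order < witnessing pyramidality, and suppose R satisfies axiom (b3) or axiom (b4). Then R(u,v) equals the closed order interval between u and v for all u,v ∈ V, i.e., for u ≤ v, R(u,v) = {w ∈ V : u ≤ w ≤ v}. -/
/-!
Each transit set is an interval containing its two endpoints, so `[u, v] ⊆ R u v`. Conversely, if
some `w ∈ R u v` lay beyond an endpoint, say `u ≤ v < w`, then `v ∈ R u w` by the interval property,
and `eq_of_mem_of_mem` (the only place where (b3) or (b4) enters) gives `w = v`, a contradiction.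
-/

namespace TransitPaper

variable {V : Type*}

/-- Under (b3) or (b4), betweenness is antisymmetric: two points cannot each lie in the transit set
joining the other to a common third point. With (b3) the point `w` lands in `R v v = {v}`; with (b4)
the point `v` lands in `R u w ∩ R w v = {w}`. -/
lemma eq_of_mem_of_mem {V : Type*} {R : V → V → Set V} (htf : IsTransit R)
    (hb : AxB3 R ∨ AxB4 R) {u v w : V} (hw : w ∈ R u v) (hv : v ∈ R u w) : w = v := by
  obtain ⟨h1, h2, h3⟩ := htf
  rcases hb with hb | hb
  · have h := hb u v w v hw hv
    rwa [h3] at h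
  · have h : v ∈ R u w ∩ R w v := ⟨hv, h2 v w ▸ h1 v w⟩
    rw [hb u v w hw] at h
    exact h.symm

/-- A monotone pyramidal transit function (with witnessing total
order <) satisfying (b3) or (b4) has R(u,v) = [u,v] for all u ≤ v. -/
theorem stmt_5 {V : Type*} [Fintype V] [Nonempty V] [LinearOrder V]
    (R : V → V → Set V) (htf : IsTransit R) (hm : IsMonotone R)
    (hint : ∀ u v : V, IsIntervalWrt (· < ·) (R u v))
    (hb : AxB3 R ∨ AxB4 R) :
    ∀ u v : V, u ≤ v → R u v = Set.Icc u v := by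
  intro u v huv
  have hl : ∀ a b, a ∈ R a b := htf.1
  have hr : ∀ a b, b ∈ R a b := fun a b => htf.2.1 b a ▸ htf.1 b a
  ext w
  constructor
  · intro hw
    refine ⟨le_of_not_gt fun hwu => ?_, le_of_not_gt fun hvw => ?_⟩
    · -- If `w < u ≤ v`, then `u` lies in the interval `R v w`.
      have hu : u ∈ R v w := by
        rcases huv.eq_or_lt with rfl | huv
        · exact hl u w
        · exact hint v w w (hr v w) v (hl v w) u hwu huv
      exact hwu.ne (eq_of_mem_of_mem htf hb (htf.2.1 u v ▸ hw) hu)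
    · -- If `u ≤ v < w`, then `v` lies in the interval `R u w`.
      have hv : v ∈ R u w := by
        rcases huv.eq_or_lt with rfl | huv
        · exact hl u w
        · exact hint u w u (hl u w) w (hr u w) v huv hvw
      exact hvw.ne' (eq_of_mem_of_mem htf hb hw hv)
  · rintro ⟨huw, hwv⟩
    rcases huw.eq_or_lt with rfl | huw
    · exact hl u v
    rcases hwv.eq_or_lt with rfl | hwv
    · exact hr u w
    exact hint u v u (hl u v) v (hr u v) w huw hwv

end TransitPaper
end

section
/- Let R be a monotone transit function on a finite nonempty set V. Then the system of transit sets 𝒞_R is γ-acyclic if and only if 𝒞_R is a hierarchy. -/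
/-!
Both directions reduce to the absence of overlapping transit sets. If `A`, `B` overlap, with
`a ∈ A \ B` and `b ∈ B \ A`, then `A`, `B`, `R a b` form a γ-triangle, so γ-acyclicity makes
intersecting transit sets comparable. Then an inclusion-maximal transit set `R x y` is all of `V`:
for any `z`, the set `R x z` also contains `x`, so it is comparable to `R x y`, hence contained
in it by maximality. Conversely, `C₁` and `C₂` of a γ-triangle overlap, and so do any two
consecutive sets of a pure cycle.
-/

namespace TransitPaper

variable {V : Type*}

/-- For a monotone transit function, 𝒞_R is γ-acyclic iff 𝒞_R is
a hierarchy. -/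
theorem stmt_6 {V : Type*} [Fintype V] [Nonempty V] (R : V → V → Set V)
    (htf : IsTransit R) (hm : IsMonotone R) :
    GammaAcyclic (transitSets R) ↔ IsHierarchy (transitSets R) := by
  obtain ⟨h1, h2, h3⟩ := htf
  have h1' : ∀ u v, v ∈ R u v := fun u v => h2 v u ▸ h1 v u
  constructor
  · rintro ⟨-, hT⟩
    have key : ∀ A ∈ transitSets R, ∀ B ∈ transitSets R, (A ∩ B).Nonempty → A ⊆ B ∨ B ⊆ A := by
      intro A hA B hB hAB
      by_contra! hcon
      obtain ⟨hcA, hcB⟩ := hcon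
      obtain ⟨a, haA, haB⟩ := Set.not_subset.1 hcA
      obtain ⟨b, hbB, hbA⟩ := Set.not_subset.1 hcB
      exact hT ⟨A, B, R a b, hA, hB, ⟨a, b, rfl⟩, hAB, ⟨a, haA, h1 a b⟩, ⟨b, hbB, h1' a b⟩,
        a, h1 a b, b, h1' a b, ⟨haA, haB⟩, ⟨hbB, hbA⟩⟩
    refine ⟨?_, fun x => ⟨x, x, (h3 x).symm⟩, ?_⟩
    · obtain ⟨v⟩ := ‹Nonempty V›
      obtain ⟨M, hM⟩ := (Set.toFinite (transitSets R)).exists_maximal ⟨R v v, v, v, rfl⟩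
      obtain ⟨x, y, rfl⟩ := hM.prop
      have hu : R x y = Set.univ := by
        refine Set.eq_univ_of_forall fun z => ?_
        rcases key _ hM.prop (R x z) ⟨x, z, rfl⟩ ⟨x, h1 x y, h1 x z⟩ with h | h
        · exact hM.le_of_ge ⟨x, z, rfl⟩ h (h1' x z)
        · exact h (h1' x z)
      exact ⟨x, y, hu.symm⟩
    · intro A hA B hB
      rcases Set.eq_empty_or_nonempty (A ∩ B) with h | h
      · exact Or.inr (Or.inr h)
      · rcases key A hA B hB h with h | h
        · exact Or.inl (Set.inter_eq_left.2 h)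
        · exact Or.inr (Or.inl (Set.inter_eq_right.2 h))
  · rintro ⟨-, -, hH⟩
    have key : ∀ A ∈ transitSets R, ∀ B ∈ transitSets R, ¬ Ovl A B := by
      rintro A hA B hB ⟨hAB, ⟨a, haA, haB⟩, ⟨b, hbB, hbA⟩⟩
      rcases hH A hA B hB with h | h | h
      · exact haB (Set.inter_eq_left.1 h haA)
      · exact hbA (Set.inter_eq_right.1 h hbB)
      · exact hAB.ne_empty h
    constructor
    · rintro ⟨n, hn, C, x, hC, hx, hnx, -⟩
      have : Fact (1 < n) := ⟨by omega⟩
      have h10 : (1 : ZMod n) ≠ 0 := one_ne_zero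
      have h20 : (1 + 1 : ZMod n) ≠ 0 := by
        intro h
        have h' : ((2 : ℕ) : ZMod n) = 0 := by
          push_cast
          rw [← h]
          norm_num
        have := Nat.le_of_dvd (by norm_num) ((ZMod.natCast_eq_zero_iff 2 n).1 h')
        omega
      -- `C 0` and `C 1` overlap: they share `x 0`, while `x (-1)` and `x 1` separate them.
      refine key _ (hC 0) _ (hC 1) ⟨⟨x 0, (hx 0).1, by simpa using (hx 0).2⟩,
        ⟨x (-1), by simpa using (hx (-1)).2, hnx _ _ ?_ ?_⟩,
        ⟨x 1, (hx 1).1, hnx _ _ h10.symm h20.symm⟩⟩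
      · exact fun h => h20 (eq_neg_iff_add_eq_zero.1 h)
      · simpa using h10
    · rintro ⟨A, B, C, hA, hB, -, hAB, -, -, u, -, w, -, hu, hw⟩
      exact key A hA B hB ⟨hAB, ⟨u, hu⟩, ⟨w, hw⟩⟩

end TransitPaper
end

section
/- Let R be a monotone transit function on a finite nonempty set V satisfying axiom (wp). Then R satisfies axiom (i). -/
namespace TransitPaper

variable {V : Type*}

/-- A monotone transit function satisfying (wp) satisfies (i). -/
theorem stmt_7 {V : Type*} [Fintype V] [Nonempty V] (R : V → V → Set V)
    (htf : IsTransit R) (hm : IsMonotone R) (hwp : AxWP R) :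
    AxI R := by
  intro x y u v p q hne hsub hnot
  obtain ⟨a, haA, haB⟩ := hne
  have haC : a ∈ R p q := hsub ⟨haA, haB⟩
  obtain ⟨c, hcC, hcAB⟩ := hnot
  -- The three sets share `a`, so (wp) applies; a point of `R x y ⊆ R p q ∪ R u v` that lies in
  -- `R u v` is in `R x y ∩ R u v ⊆ R p q`, and symmetrically.
  rcases hwp x y u v p q ⟨a, haA, haB⟩ ⟨a, haA, haC⟩ ⟨a, haB, haC⟩ with h | h | h
  · exact absurd (h hcC) hcAB
  · exact Or.inl fun z hz => (h hz).elim id fun hzB => hsub ⟨hz, hzB⟩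
  · exact Or.inr fun z hz => (h hz).elim id fun hzA => hsub ⟨hzA, hz⟩

end TransitPaper
end

section
/- Let R be a monotone transit function on a finite nonempty set V satisfying axiom (i). Then R satisfies axiom (o'). -/
/-!
Fix `z`. Call `a, b, c` a *`z`-triple* if none of the three points lies in the transit set of `z` with another.
A `z`-triple cannot exist: applied to the three sets `R z a`, `R z b`, `R z c`, axiom (i) shows
that each pairwise intersection sticks out of the third set. Points `x, y, w` witnessing this form
a new `z`-triple by monotonicity, and `R z x` is strictly smaller than `R z a`, so finiteness
gives a contradiction (`no_triple`).

For `z ∈ R u v`, pick `p ∈ R u v` with `R z p` maximal and, unless `R z p` is already everything,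
`q ∈ R u v \ R z p` with `R z q` maximal among such points. A point of `R u v` missed by
`R z p ∪ R z q` would form a `z`-triple with `p` and `q`.
-/

namespace TransitPaper

variable {V : Type*}

/-- Axiom (i) for three transit sets through `z`, read contrapositively: if `a ∉ R z c`,
`b ∉ R z c` and `c` lies in neither `R z a` nor `R z b`, then `R z a ∩ R z b ⊄ R z c`. -/
lemma exists_mem_inter_not_mem {V : Type*} {R : V → V → Set V}
    (htf : IsTransit R) (hi : AxI R) {z a b c : V}
    (hac : a ∉ R z c) (hbc : b ∉ R z c) (hca : c ∉ R z a) (hcb : c ∉ R z b) :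
    ∃ x, x ∈ R z a ∧ x ∈ R z b ∧ x ∉ R z c := by
  obtain ⟨h1, h2, -⟩ := htf
  have hr : ∀ s, s ∈ R z s := fun s => h2 s z ▸ h1 s z
  by_contra! h
  rcases hi z a z b z c ⟨z, h1 z a, h1 z b⟩ (fun x hx => h x hx.1 hx.2)
    ⟨c, hr c, fun hc => hc.elim hca hcb⟩ with h' | h'
  · exact hac (h' (hr a))
  · exact hbc (h' (hr b))

/-- There is no triple of points none of which lies in the transit set of `z` with another one.
The proof is by descent on the size of `R z a`. -/
lemma no_triple {V : Type*} [Finite V] {R : V → V → Set V}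
    (htf : IsTransit R) (hm : IsMonotone R) (hi : AxI R) {z : V} (n : ℕ) :
    ∀ a b c : V, (R z a).ncard = n → a ∉ R z b → a ∉ R z c → b ∉ R z a → b ∉ R z c →
      c ∉ R z a → c ∉ R z b → False := by
  induction n using Nat.strong_induction_on with
  | _ n ih =>
    intro a b c hn hab hac hba hbc hca hcb
    have hr : ∀ s, s ∈ R z s := fun s => htf.2.1 s z ▸ htf.1 s z
    have sub : ∀ {s t}, s ∈ R z t → R z s ⊆ R z t := fun {s t} h => hm z t z s (htf.1 z t) h
    obtain ⟨x, hxa, hxb, hxc⟩ := exists_mem_inter_not_mem htf hi hac hbc hca hcb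
    obtain ⟨y, hya, hyc, hyb⟩ := exists_mem_inter_not_mem htf hi hab hcb hba hbc
    obtain ⟨w, hwb, hwc, hwa⟩ := exists_mem_inter_not_mem htf hi hba hca hab hac
    have hlt : (R z x).ncard < n := by
      rw [← hn]
      exact Set.ncard_lt_ncard ⟨sub hxa, fun h => hab (sub hxb (h (hr a)))⟩
    exact ih _ hlt x y w rfl (fun h => hxc (sub hyc h)) (fun h => hxc (sub hwc h))
      (fun h => hyb (sub hxb h)) (fun h => hyb (sub hwb h))
      (fun h => hwa (sub hxa h)) (fun h => hwa (sub hya h))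

/-- A monotone transit function satisfying (i) satisfies (o'). -/
theorem stmt_8 {V : Type*} [Fintype V] [Nonempty V] (R : V → V → Set V)
    (htf : IsTransit R) (hm : IsMonotone R) (hi : AxI R) :
    AxO' R := by
  intro u v z hz
  have hr : ∀ s, s ∈ R z s := fun s => htf.2.1 s z ▸ htf.1 s z
  have sub : ∀ {s t}, s ∈ R z t → R z s ⊆ R z t := fun {s t} h => hm z t z s (htf.1 z t) h
  obtain ⟨p, hp, hpmax⟩ := (Set.toFinite (R u v)).exists_maximalFor (R z) _ ⟨z, hz⟩
  have hpS : R p z ⊆ R u v := hm u v p z hp hz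
  by_cases hne : (R u v \ R z p).Nonempty
  · obtain ⟨q, ⟨hq, hqp⟩, hqmax⟩ :=
      (Set.toFinite (R u v \ R z p)).exists_maximalFor (R z) _ hne
    refine ⟨p, hp, q, hq, (Set.union_subset hpS (hm u v z q hz hq)).antisymm ?_⟩
    intro r hru
    rw [htf.2.1 p z]
    by_contra hr'
    have hrp : r ∉ R z p := fun h => hr' (Or.inl h)
    have hrq : r ∉ R z q := fun h => hr' (Or.inr h)
    exact no_triple htf hm hi _ p q r rfl
      (fun h => hqp (hpmax hq (sub h) (hr q)))
      (fun h => hrp (hpmax hru (sub h) (hr r)))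
      hqp
      (fun h => hrq (hqmax ⟨hru, hrp⟩ (sub h) (hr r)))
      hrp hrq
  · refine ⟨p, hp, p, hp, ?_⟩
    rw [htf.2.1 z p, Set.union_self]
    refine hpS.antisymm ?_
    rw [htf.2.1 p z]
    exact Set.sdiff_eq_empty.mp (Set.not_nonempty_iff_eq_empty.mp hne)

end TransitPaper
end

section
/- Let 𝒞 be a set system on a finite nonempty set V satisfying axiom (WP). Then 𝒞 satisfies axiom (I). -/
namespace TransitPaper

variable {V : Type*}

/-- A set system satisfying (WP) satisfies (I). -/
theorem stmt_9 {V : Type*} [Fintype V] [Nonempty V] (𝒞 : Set (Set V))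
    (hne : ∀ C ∈ 𝒞, C.Nonempty) (hwp : AxWPSet 𝒞) :
    AxISet 𝒞 := by
  intro A hA B hB C hC ⟨x, hxA, hxB⟩ hAB ⟨z, hzC, hz⟩
  have hxC : x ∈ C := hAB ⟨hxA, hxB⟩
  rcases hwp A hA B hB C hC ⟨x, hxA, hxB⟩ ⟨x, hxA, hxC⟩ ⟨x, hxB, hxC⟩ with h | h | h
  -- A point of `A` lying in `B` is in `A ∩ B ⊆ C`, so `A ⊆ B ∪ C` already forces `A ⊆ C`.
  · exact Or.inl fun a ha => (h ha).elim (fun hb => hAB ⟨ha, hb⟩) id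
  · exact Or.inr fun b hb => (h hb).elim (fun ha => hAB ⟨ha, hb⟩) id
  · exact absurd (h hzC) hz

end TransitPaper
end
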